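/- arXiv:1212.5832 — 3 statements merged into one kernel-verified Lean document; each statement's English description precedes it below -/
import Mathlib

section
/- Let Q be an affine quiver and k an algebraically closed field. Every indecomposable representation X of Q over k whose dimension vector has nonzero defect, ∂(dim X) = e(δ, dim X) ≠ 0 (i.e., X is preprojective or preinjective), is a brick: End(X) = k·id_X. -/
open scoped BigOperators

/-- A finite quiver: finite sets of vertices and arrows with source and target maps. -/
structure FinQuiver where
  V : Type
  A : Type
  [fintypeV : Fintype V]
  [fintypeA : Fintype A]
  [decEqV : DecidableEq V]
  src : A → V
  tgt : A → V

attribute [instance] FinQuiver.fintypeV FinQuiver.fintypeA FinQuiver.decEqV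

namespace FinQuiver

variable (Q : FinQuiver)

/-- The Euler form of a finite quiver. -/
def eulerForm (x y : Q.V → ℤ) : ℤ :=
  (∑ i : Q.V, x i * y i) - ∑ a : Q.A, x (Q.src a) * y (Q.tgt a)

/-- The Tits form of a finite quiver. -/
def titsForm (x : Q.V → ℤ) : ℤ := Q.eulerForm x x

/-- The quiver has no loops. -/
def NoLoops : Prop := ∀ a : Q.A, Q.src a ≠ Q.tgt a

/-- The underlying (simple) graph of a quiver without loops. -/
def graph : SimpleGraph Q.V where
  Adj i j := i ≠ j ∧ ∃ a : Q.A, (Q.src a = i ∧ Q.tgt a = j) ∨ (Q.src a = j ∧ Q.tgt a = i)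
  symm := by
    constructor
    rintro i j ⟨hij, a, h⟩
    exact ⟨hij.symm, a, h.symm⟩
  loopless := by
    constructor
    rintro i ⟨hii, -⟩
    exact hii rfl

/-- The quiver has no oriented cycles. -/
def Acyclic : Prop :=
  ¬ ∃ (n : ℕ) (g : Fin (n + 1) → Q.A), ∀ k, Q.tgt (g k) = Q.src (g (k + 1))

/-- The double quiver: for each arrow `a : i → j` add a reverse arrow `a* : j → i`. -/
def double : FinQuiver where
  V := Q.V
  A := Q.A ⊕ Q.A
  src := Sum.elim Q.src Q.tgt
  tgt := Sum.elim Q.tgt Q.src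

/-- Positive roots: nonzero, nonnegative integer vectors with Tits form at most 1. -/
def PosRoot (x : Q.V → ℤ) : Prop := (∀ i, 0 ≤ x i) ∧ x ≠ 0 ∧ Q.titsForm x ≤ 1

end FinQuiver

/-- An affine quiver: connected, no loops, no oriented cycles, Tits form positive
semidefinite but not positive definite; `δ` is the minimal positive imaginary root,
generating the radical of the symmetrized Euler form. -/
structure AffineQuiver extends FinQuiver where
  noLoops : toFinQuiver.NoLoops
  connected : toFinQuiver.graph.Connected
  acyclic : toFinQuiver.Acyclic
  posSemidef : ∀ x : V → ℤ, 0 ≤ toFinQuiver.titsForm x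
  notPosDef : ∃ x : V → ℤ, x ≠ 0 ∧ toFinQuiver.titsForm x = 0
  δ : V → ℤ
  delta_pos : ∀ i, 0 < δ i
  radical_iff : ∀ x : V → ℤ,
    (∀ y : V → ℤ, toFinQuiver.eulerForm x y + toFinQuiver.eulerForm y x = 0) ↔
      ∃ m : ℤ, x = m • δ

/-- The defect `∂(x) = e(δ, x)`. -/
def AffineQuiver.defect (Q : AffineQuiver) (x : Q.V → ℤ) : ℤ :=
  Q.eulerForm Q.δ x

/-- A finite-dimensional representation of a finite quiver over a field `k`. -/
structure QRep (Q : FinQuiver) (k : Type) [Field k] where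
  carrier : Q.V → Type
  [acgI : ∀ i, AddCommGroup (carrier i)]
  [modI : ∀ i, Module k (carrier i)]
  [fdI : ∀ i, FiniteDimensional k (carrier i)]
  map : ∀ a : Q.A, carrier (Q.src a) →ₗ[k] carrier (Q.tgt a)

attribute [instance] QRep.acgI QRep.modI QRep.fdI

namespace QRep

variable {Q : FinQuiver} {k : Type} [Field k]

/-- The dimension vector of a representation. -/
noncomputable def dimVec (X : QRep Q k) : Q.V → ℤ :=
  fun i => (Module.finrank k (X.carrier i) : ℤ)

end QRep

/-- A subrepresentation: a family of subspaces stable under all the arrow maps. -/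
structure SubRep {Q : FinQuiver} {k : Type} [Field k] (X : QRep Q k) where
  mod : ∀ i, Submodule k (X.carrier i)
  stable : ∀ a : Q.A, ∀ x ∈ mod (Q.src a), X.map a x ∈ mod (Q.tgt a)

namespace SubRep

variable {Q : FinQuiver} {k : Type} [Field k] {X : QRep Q k}

/-- The dimension vector of a subrepresentation. -/
noncomputable def dimVec (U : SubRep X) : Q.V → ℤ :=
  fun i => (Module.finrank k (U.mod i) : ℤ)

/-- The representation carried by a subrepresentation. -/
def toRep (U : SubRep X) : QRep Q k where
  carrier i := U.mod i
  map a := (X.map a).restrict (U.stable a)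

end SubRep

namespace QRep

variable {Q : FinQuiver} {k : Type} [Field k]

/-- The quotient representation by a subrepresentation. -/
def quotBy (X : QRep Q k) (U : SubRep X) : QRep Q k where
  carrier i := X.carrier i ⧸ U.mod i
  map a := Submodule.mapQ _ _ (X.map a) (fun x hx => U.stable a x hx)

/-- A representation is indecomposable if it is nonzero and is not the internal direct
sum of two nonzero subrepresentations. -/
def Indecomposable (X : QRep Q k) : Prop :=
  (∃ i, 0 < Module.finrank k (X.carrier i)) ∧
    ∀ U W : SubRep X, (∀ i, IsCompl (U.mod i) (W.mod i)) →
      (∀ i, U.mod i = ⊥) ∨ (∀ i, W.mod i = ⊥)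

end QRep

/-- An isomorphism of representations of a quiver. -/
structure RepIso {Q : FinQuiver} {k : Type} [Field k] (X Y : QRep Q k) where
  equiv : ∀ i, X.carrier i ≃ₗ[k] Y.carrier i
  comm : ∀ (a : Q.A) (x : X.carrier (Q.src a)),
    equiv (Q.tgt a) (X.map a x) = Y.map a (equiv (Q.src a) x)

section Preprojective

variable {Q : FinQuiver} {k : Type} [Field k]

/-- The endomorphism of `⊕ᵢ Xᵢ` induced by the map attached to a single arrow. -/
def arrowEnd (X : QRep Q k) (a : Q.A) :
    (∀ i, X.carrier i) →ₗ[k] (∀ i, X.carrier i) :=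
  (LinearMap.single k X.carrier (Q.tgt a)).comp
    ((X.map a).comp (LinearMap.proj (Q.src a)))

/-- The preprojective relation for a representation of the double quiver:
at every vertex, `∑_{t(a)=i} X_a ∘ X_{a*} − ∑_{s(a)=i} X_{a*} ∘ X_a = 0`.
(Stated as one equation of endomorphisms of `⊕ᵢ Xᵢ`, which is equivalent since the
`i`-component of the equation is exactly the relation at the vertex `i`.) -/
def PreprojRel (Q : FinQuiver) {k : Type} [Field k] (X : QRep Q.double k) : Prop :=
  (∑ a : Q.A, (arrowEnd X (Sum.inl a)).comp (arrowEnd X (Sum.inr a)))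
    = ∑ a : Q.A, (arrowEnd X (Sum.inr a)).comp (arrowEnd X (Sum.inl a))

/-- Forget the reverse arrows: a representation of `Π_Q` gives a representation of `Q`. -/
def rho (X : QRep Q.double k) : QRep Q k where
  carrier := X.carrier
  acgI := X.acgI
  modI := X.modI
  fdI := X.fdI
  map a := X.map (Sum.inl a)

/-- A subrepresentation of a `Π_Q`-representation is in particular a subrepresentation of
the underlying `Q`-representation. -/
def rhoSub {X : QRep Q.double k} (U : SubRep X) : SubRep (rho X) where
  mod := U.mod
  stable a x hx := U.stable (Sum.inl a) x hx

/-- A representation of the double quiver is ρ-fixed if all reverse arrows act as zero. -/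
def RhoFixed (X : QRep Q.double k) : Prop :=
  ∀ a : Q.A, X.map (Sum.inr a) = 0

/-- Extend a representation of `Q` to the double quiver by letting all reverse arrows
act as zero. -/
def extendZero (P : QRep Q k) : QRep Q.double k where
  carrier := P.carrier
  acgI := P.acgI
  modI := P.modI
  fdI := P.fdI
  map b := match b with
    | Sum.inl a => P.map a
    | Sum.inr _ => 0

end Preprojective

section SubQuot

variable {Q : FinQuiver} {k : Type} [Field k]

/-- The subquotient representation `W / U` attached to nested subrepresentations
`U ≤ W` of `Z`. -/
def subQuot (Z : QRep Q k) (U W : SubRep Z) (h : ∀ i, U.mod i ≤ W.mod i) : QRep Q k where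
  carrier i := ↥(W.mod i) ⧸ (U.mod i).comap (W.mod i).subtype
  map a := Submodule.mapQ _ _ (W.toRep.map a)
    (fun x hx => U.stable a x.1 hx)

end SubQuot

/-- The endomorphism algebra `End(X)` of a quiver representation, as a subspace of
`Π i, End(Xᵢ)`: families of linear maps commuting with all arrow maps. -/
def endSubmodule {Q : FinQuiver} {k : Type} [Field k] (X : QRep Q k) :
    Submodule k (∀ i, X.carrier i →ₗ[k] X.carrier i) where
  carrier := {f | ∀ a : Q.A, (f (Q.tgt a)).comp (X.map a) = (X.map a).comp (f (Q.src a))}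
  add_mem' := by
    intro f g hf hg a
    simp only [Pi.add_apply, LinearMap.add_comp, LinearMap.comp_add, hf a, hg a]
  zero_mem' := by
    intro a
    simp only [Pi.zero_apply, LinearMap.zero_comp, LinearMap.comp_zero]
  smul_mem' := by
    intro c f hf a
    simp only [Pi.smul_apply, LinearMap.smul_comp, LinearMap.comp_smul, hf a]

section Num
set_option linter.unusedSectionVars false
variable {V A : Type} [Fintype V] [Fintype A] [DecidableEq V]

/-- The Euler form in unbundled form. -/
def EF (s t : A → V) (x y : V → ℤ) : ℤ := (∑ i : V, x i * y i) - ∑ a : A, x (s a) * y (t a)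

theorem EF_swap (s t : A → V) (x y : V → ℤ) : EF t s x y = EF s t y x := by
  unfold EF
  congr 1
  · exact Finset.sum_congr rfl fun i _ => mul_comm _ _
  · exact Finset.sum_congr rfl fun i _ => mul_comm _ _

theorem EF_add_right (s t : A → V) (x y z : V → ℤ) : EF s t x (y + z) = EF s t x y + EF s t x z := by
  simp only [EF, Pi.add_apply, mul_add, Finset.sum_add_distrib]; ring

theorem EF_smul_right (s t : A → V) (m : ℤ) (x y : V → ℤ) : EF s t x (m • y) = m * EF s t x y := by
  simp only [EF, Pi.smul_apply, smul_eq_mul, mul_sub, Finset.mul_sum]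
  congr 1 <;> exact Finset.sum_congr rfl fun i _ => by ring

theorem EF_add_left (s t : A → V) (x y z : V → ℤ) : EF s t (x + y) z = EF s t x z + EF s t y z := by
  rw [← EF_swap, EF_add_right, EF_swap s t, EF_swap s t]

theorem EF_smul_left (s t : A → V) (m : ℤ) (x y : V → ℤ) : EF s t (m • x) y = m * EF s t x y := by
  rw [← EF_swap, EF_smul_right, EF_swap]

theorem EF_sum_right (s t : A → V) {ι : Type} (F : Finset ι) (x : V → ℤ) (y : ι → V → ℤ) :
    EF s t x (∑ i ∈ F, y i) = ∑ i ∈ F, EF s t x (y i) := by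
  classical
  induction F using Finset.induction_on with
  | empty => simp [EF]
  | insert a F ha ih => rw [Finset.sum_insert ha, Finset.sum_insert ha, EF_add_right, ih]

theorem EF_sum_left (s t : A → V) {ι : Type} (F : Finset ι) (x : V → ℤ) (y : ι → V → ℤ) :
    EF s t (∑ i ∈ F, y i) x = ∑ i ∈ F, EF s t (y i) x := by
  rw [← EF_swap, EF_sum_right]
  exact Finset.sum_congr rfl fun i _ => EF_swap ..

/-- The edge coordinate. -/
def edgeC (s t : A → V) (δ : V → ℤ) (x : V → ℤ) (a : A) : ℤ :=
  x (s a) * δ (t a) - x (t a) * δ (s a)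

theorem sym_eq (s t : A → V) (δ : V → ℤ) (hpos : ∀ i, 0 < δ i)
    (hrad : ∀ y, EF s t δ y + EF s t y δ = 0) (z y : V → ℤ) :
    ((EF s t z y + EF s t y z : ℤ) : ℚ) =
      ∑ a, (edgeC s t δ z a : ℚ) * edgeC s t δ y a / (δ (s a) * δ (t a)) := by
  have hne : ∀ i, (δ i : ℚ) ≠ 0 := fun i => by exact_mod_cast (hpos i).ne'
  have h1 : ∀ i, (2 * δ i : ℚ) =
      ∑ a, ((if s a = i then (δ (t a) : ℚ) else 0) + (if t a = i then (δ (s a) : ℚ) else 0)) := by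
    intro i
    have h := hrad (Pi.single i 1)
    simp only [EF, Pi.single_apply, mul_ite, ite_mul, mul_one, one_mul, mul_zero, zero_mul,
      Finset.sum_ite_eq', Finset.mem_univ, if_true] at h
    have h' : 2 * δ i = ∑ a, ((if s a = i then (δ (t a)) else 0) + (if t a = i then (δ (s a)) else 0)) := by
      rw [Finset.sum_add_distrib]; linarith
    have := congrArg (Int.cast : ℤ → ℚ) h'
    push_cast at this
    exact this
  have h2 : ∑ i, (2 * (z i : ℚ) * y i) =
      ∑ a, ((z (s a) : ℚ) * y (s a) / δ (s a) * δ (t a) + (z (t a) : ℚ) * y (t a) / δ (t a) * δ (s a)) := by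
    calc ∑ i, (2 * (z i : ℚ) * y i) = ∑ i, ((z i : ℚ) * y i / δ i) * (2 * δ i) := by
          refine Finset.sum_congr rfl fun i _ => ?_
          have := hne i
          field_simp
      _ = _ := by
          simp_rw [h1, Finset.mul_sum]
          rw [Finset.sum_comm]
          refine Finset.sum_congr rfl fun a _ => ?_
          simp [mul_add, Finset.sum_add_distrib]
  have h3 : ((EF s t z y + EF s t y z : ℤ) : ℚ) = ∑ i, (2 * (z i : ℚ) * y i)
      - ∑ a, ((z (s a) : ℚ) * y (t a) + y (s a) * z (t a)) := by
    unfold EF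
    push_cast
    rw [Finset.sum_add_distrib]
    have : ∑ i, (2 * (z i : ℚ) * y i) = ∑ i, (z i : ℚ) * y i + ∑ i, (y i : ℚ) * z i := by
      rw [← Finset.sum_add_distrib]
      exact Finset.sum_congr rfl fun i _ => by ring
    rw [this]; ring
  rw [h3, h2, ← Finset.sum_sub_distrib]
  refine Finset.sum_congr rfl fun a _ => ?_
  have h4 := hne (s a)
  have h5 := hne (t a)
  unfold edgeC
  push_cast
  field_simp
  ring

/-- There is no infinite nonnegative Coxeter orbit of negative defect. -/
theorem no_orbit (s t : A → V) [Nonempty V] (δ : V → ℤ) (hpos : ∀ i, 0 < δ i)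
    (hrad : ∀ x : V → ℤ, (∀ y, EF s t x y + EF s t y x = 0) ↔ ∃ m : ℤ, x = m • δ)
    (α : ℕ → V → ℤ) (hnn : ∀ n i, 0 ≤ α n i)
    (hc : ∀ n x, EF s t x (α (n + 1)) = - EF s t (α n) x)
    (hneg : EF s t δ (α 0) < 0) : False := by
  have hδ : ∀ y, EF s t δ y + EF s t y δ = 0 := (hrad δ).2 ⟨1, by simp⟩
  have hS := sym_eq s t δ hpos hδ
  have hδδ : EF s t δ δ = 0 := by have := hδ δ; omega
  have hdef : ∀ n, EF s t δ (α n) = EF s t δ (α 0) := by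
    intro n
    induction n with
    | zero => rfl
    | succ n ih => rw [hc, ← ih]; have := hδ (α n); omega
  have hq : ∀ n, EF s t (α n) (α n) = EF s t (α 0) (α 0) := by
    intro n
    induction n with
    | zero => rfl
    | succ n ih => rw [hc, hc, ← ih]; ring
  have hp2 : ∀ a, (0 : ℚ) < δ (s a) * δ (t a) := fun a => by exact_mod_cast mul_pos (hpos _) (hpos _)
  have hterm : ∀ x a, (0 : ℚ) ≤ (edgeC s t δ x a : ℚ) * edgeC s t δ x a / (δ (s a) * δ (t a)) :=
    fun x a => div_nonneg (mul_self_nonneg _) (hp2 a).le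
  have hpsd : ∀ x, 0 ≤ EF s t x x := by
    intro x
    have h := hS x x
    have h2 : (0 : ℚ) ≤ ((EF s t x x + EF s t x x : ℤ) : ℚ) := by
      rw [h]; exact Finset.sum_nonneg fun a _ => hterm x a
    have : 0 ≤ EF s t x x + EF s t x x := by exact_mod_cast h2
    omega
  have hker : ∀ x, (∀ a, edgeC s t δ x a = 0) → ∃ m : ℤ, x = m • δ := by
    intro x hx
    rw [← hrad]
    intro y
    have h := hS x y
    simp only [hx] at h
    simp at h
    exact_mod_cast h
  have hzero : ∀ x, EF s t x x = 0 → ∃ m : ℤ, x = m • δ := by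
    intro x hx
    apply hker
    have h := hS x x
    rw [hx] at h
    simp only [add_zero, Int.cast_zero] at h
    have h2 := (Finset.sum_eq_zero_iff_of_nonneg (fun a _ => hterm x a)).1 h.symm
    intro a
    have h3 := h2 a (Finset.mem_univ _)
    rw [div_eq_zero_iff] at h3
    rcases h3 with h3 | h3
    · have := mul_self_eq_zero.1 h3
      exact_mod_cast this
    · exact absurd h3 (hp2 a).ne'
  -- boundedness
  have hbd : ∃ K : ℤ, ∀ n a, edgeC s t δ (α n) a ∈ Set.Icc (-K) K := by
    have hb : ∀ n a, (edgeC s t δ (α n) a) ^ 2 ≤ 2 * EF s t (α 0) (α 0) * (δ (s a) * δ (t a)) := by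
      intro n a
      have h := hS (α n) (α n)
      have h2 := Finset.single_le_sum (fun a _ => hterm (α n) a) (Finset.mem_univ a)
      rw [← h, hq, div_le_iff₀ (hp2 a)] at h2
      have h3 : edgeC s t δ (α n) a * edgeC s t δ (α n) a ≤
        (EF s t (α 0) (α 0) + EF s t (α 0) (α 0)) * (δ (s a) * δ (t a)) := by exact_mod_cast h2
      nlinarith
    refine ⟨∑ a, 2 * EF s t (α 0) (α 0) * (δ (s a) * δ (t a)), fun n a => ?_⟩
    have h0 : ∀ b, 0 ≤ 2 * EF s t (α 0) (α 0) * (δ (s b) * δ (t b)) := fun b =>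
      mul_nonneg (mul_nonneg (by norm_num) (hpsd _)) (mul_pos (hpos _) (hpos _)).le
    have h1 := (hb n a).trans (Finset.single_le_sum (fun b _ => h0 b) (Finset.mem_univ a))
    constructor <;> nlinarith [Int.le_self_sq (edgeC s t δ (α n) a), Int.le_self_sq (- edgeC s t δ (α n) a)]
  obtain ⟨K, hK⟩ := hbd
  let f : ℕ → (A → Set.Icc (-K) K) := fun n a => ⟨_, hK n a⟩
  obtain ⟨c, hcI⟩ := Finite.exists_infinite_fiber f
  rw [Set.infinite_coe_iff] at hcI
  -- comparison
  have hlt : ∀ r u, r < u → f r = f u → ∀ i, α u i < α r i := by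
    intro r u hru hf i
    obtain ⟨m, hm⟩ : ∃ m : ℤ, α u - α r = m • δ := by
      apply hker
      intro a
      have h := congrArg Subtype.val (congrFun hf a)
      simp only [f] at h
      simp only [edgeC, Pi.sub_apply] at h ⊢
      linear_combination -h
    set S : V → ℤ := ∑ n ∈ Finset.Ico r u, α n with hSdef
    have hS' : ∑ n ∈ Finset.Ico r u, α (n + 1) = S + m • δ := by
      rw [← hm, hSdef, ← sub_eq_iff_eq_add', ← Finset.sum_sub_distrib, Finset.sum_Ico_sub α hru.le]
    have hx : ∀ x, EF s t x S + m * EF s t x δ = - EF s t S x := by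
      intro x
      rw [← EF_smul_right, ← EF_add_right, ← hS', EF_sum_right, hSdef, EF_sum_left]
      simp [hc]
    have hdS : EF s t δ S = (u - r : ℤ) * EF s t δ (α 0) := by
      rw [hSdef, EF_sum_right]
      simp [hdef, Nat.cast_sub hru.le]
    have hur : (0 : ℤ) < u - r := by omega
    have hdneg : EF s t δ S < 0 := by rw [hdS]; exact mul_neg_of_pos_of_neg hur hneg
    have h2 : 2 * EF s t S S = m * EF s t δ S := by
      have h3 := hx S
      have h4 := hδ S
      have : EF s t S δ = - EF s t δ S := by omega
      rw [this] at h3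
      linarith
    have hSS : EF s t S S ≠ 0 := by
      intro h0
      obtain ⟨l, hl⟩ := hzero S h0
      rw [hl, EF_smul_right, hδδ, mul_zero] at hdneg
      exact lt_irrefl _ hdneg
    have hpp : 0 < EF s t S S := lt_of_le_of_ne (hpsd S) (Ne.symm hSS)
    have hm0 : m < 0 := by
      by_contra hm0
      push Not at hm0
      nlinarith
    have := congrFun hm i
    simp only [Pi.sub_apply, Pi.smul_apply, smul_eq_mul] at this
    nlinarith [hpos i]
  obtain ⟨i⟩ := ‹Nonempty V›
  obtain ⟨r0, hr0⟩ := hcI.nonempty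
  -- minimum
  have key : ∀ N : ℕ, ∀ r ∈ f ⁻¹' {c}, (α r i).toNat ≤ N → False := by
    intro N
    induction N with
    | zero =>
      intro r hr hle
      obtain ⟨u, hu, hru⟩ := hcI.exists_gt r
      have := hlt r u hru (by rw [Set.mem_preimage, Set.mem_singleton_iff] at hr hu; rw [hr, hu]) i
      have := hnn u i
      omega
    | succ N ih =>
      intro r hr hle
      obtain ⟨u, hu, hru⟩ := hcI.exists_gt r
      have := hlt r u hru (by rw [Set.mem_preimage, Set.mem_singleton_iff] at hr hu; rw [hr, hu]) i
      have := hnn u i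
      exact ih u hu (by omega)
  exact key _ r0 hr0 le_rfl

end Num
section TotalRep
set_option linter.unusedSectionVars false

/-- A representation of a quiver on its total space. -/
structure TRep (k : Type) [Field k] {V A : Type} [Fintype V] [DecidableEq V] (s t : A → V) where
  M : Type
  [acg : AddCommGroup M]
  [mod : Module k M]
  [fd : FiniteDimensional k M]
  p : V → Module.End k M
  x : A → Module.End k M
  p_sum : ∀ m, ∑ j, p j m = m
  p_idem : ∀ i m, p i (p i m) = p i m
  p_orth : ∀ i j, i ≠ j → ∀ m, p i (p j m) = 0
  p_x : ∀ a m, p (t a) (x a m) = x a m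
  x_p : ∀ a m, x a (p (s a) m) = x a m

attribute [instance] TRep.acg TRep.mod TRep.fd

namespace TRep
variable {k : Type} [Field k] {V A : Type} [Fintype V] [DecidableEq V] {s t : A → V}

/-- endomorphisms of a total representation -/
def IsEnd (X : TRep k s t) (φ : Module.End k X.M) : Prop :=
  (∀ j m, φ (X.p j m) = X.p j (φ m)) ∧ (∀ a m, φ (X.x a m) = X.x a (φ m))

/-- indecomposability -/
def Indec (X : TRep k s t) : Prop :=
  Nontrivial X.M ∧ ∀ φ, X.IsEnd φ → (∀ m, φ (φ m) = φ m) → φ = 0 ∨ φ = 1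

/-- bricks -/
def Brick (X : TRep k s t) : Prop := ∀ φ, X.IsEnd φ → ∃ c : k, φ = c • 1

/-- dimension vector -/
noncomputable def dim (X : TRep k s t) (j : V) : ℤ := (Module.finrank k (LinearMap.range (X.p j)) : ℤ)

theorem p_x_ne (X : TRep k s t) (a : A) (j : V) (h : j ≠ t a) (m : X.M) : X.p j (X.x a m) = 0 := by
  rw [← X.p_x a m, X.p_orth _ _ h]

theorem x_p_ne (X : TRep k s t) (a : A) (j : V) (h : s a ≠ j) (m : X.M) : X.x a (X.p j m) = 0 := by
  rw [← X.x_p a, X.p_orth _ _ h, map_zero]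

variable [Fintype A]

/-- The sum of the incoming maps at the vertex `i`, on families. -/
def sig (X : TRep k s t) : (A → X.M) →ₗ[k] X.M := ∑ a, X.x a ∘ₗ LinearMap.proj a

theorem sig_apply (X : TRep k s t) (κ : A → X.M) : X.sig κ = ∑ a, X.x a (κ a) := by
  simp [sig]

/-- Projectors to the sources of arrows ending at `i`. -/
def EE (X : TRep k s t) (i : V) (a : A) : Module.End k X.M := if t a = i then X.p (s a) else 0

theorem EE_idem (X : TRep k s t) (i : V) (a : A) (m : X.M) : X.EE i a (X.EE i a m) = X.EE i a m := by
  unfold EE; split_ifs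
  · exact X.p_idem _ _
  · simp

/-- The families supported at arrows ending at `i`. -/
def NN (X : TRep k s t) (i : V) : Submodule k (A → X.M) where
  carrier := {κ | ∀ a, X.EE i a (κ a) = κ a}
  add_mem' := by intro f g hf hg a; simp [hf a, hg a]
  zero_mem' := by intro a; simp
  smul_mem' := by intro c f hf a; simp [hf a]

theorem mem_NN (X : TRep k s t) (i : V) (κ : A → X.M) : κ ∈ X.NN i ↔ ∀ a, X.EE i a (κ a) = κ a := Iff.rfl

theorem sig_mem (X : TRep k s t) (i : V) (κ : A → X.M) (h : κ ∈ X.NN i) : X.p i (X.sig κ) = X.sig κ := by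
  rw [sig_apply, map_sum]
  refine Finset.sum_congr rfl fun a _ => ?_
  by_cases ha : t a = i
  · rw [← ha, X.p_x]
  · have := h a
    simp only [EE, if_neg ha, LinearMap.zero_apply] at this
    rw [← this]; simp

/-- The total space of the reflected representation. -/
def RM (X : TRep k s t) (i : V) : Submodule k ((A → X.M) × X.M) where
  carrier := {z | z.1 ∈ X.NN i ∧ X.sig z.1 = 0 ∧ X.p i z.2 = 0}
  add_mem' := by
    rintro f g ⟨h1, h2, h3⟩ ⟨h1', h2', h3'⟩
    exact ⟨(X.NN i).add_mem h1 h1', by simp [h2, h2'], by simp [h3, h3']⟩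
  zero_mem' := ⟨(X.NN i).zero_mem, by simp, by simp⟩
  smul_mem' := by
    rintro c f ⟨h1, h2, h3⟩
    exact ⟨(X.NN i).smul_mem c h1, by simp [h2], by simp [h3]⟩

theorem mem_RM (X : TRep k s t) (i : V) (z) :
    z ∈ X.RM i ↔ z.1 ∈ X.NN i ∧ X.sig z.1 = 0 ∧ X.p i z.2 = 0 := Iff.rfl

/-- ambient projectors -/
def AP (X : TRep k s t) (i j : V) : Module.End k ((A → X.M) × X.M) :=
  if j = i then LinearMap.inl k _ _ ∘ₗ LinearMap.fst k _ _
  else LinearMap.inr k _ _ ∘ₗ X.p j ∘ₗ LinearMap.snd k _ _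

/-- ambient arrows -/
def AX (X : TRep k s t) (i : V) (a : A) : Module.End k ((A → X.M) × X.M) :=
  if t a = i then LinearMap.inr k _ _ ∘ₗ LinearMap.proj a ∘ₗ LinearMap.fst k _ _
  else LinearMap.inr k _ _ ∘ₗ X.x a ∘ₗ LinearMap.snd k _ _

theorem AP_self (X : TRep k s t) (i : V) (z) : X.AP i i z = (z.1, 0) := by simp [AP]
theorem AP_ne (X : TRep k s t) {i j : V} (h : j ≠ i) (z) : X.AP i j z = (0, X.p j z.2) := by
  simp [AP, h]
theorem AX_eq (X : TRep k s t) {i : V} {a : A} (h : t a = i) (z) : X.AX i a z = (0, z.1 a) := by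
  simp [AX, h]
theorem AX_ne (X : TRep k s t) {i : V} {a : A} (h : t a ≠ i) (z) : X.AX i a z = (0, X.x a z.2) := by
  simp [AX, h]

theorem AP_mem (X : TRep k s t) (i j : V) (z) (hz : z ∈ X.RM i) : X.AP i j z ∈ X.RM i := by
  obtain ⟨h1, h2, h3⟩ := hz
  by_cases h : j = i
  · subst h; rw [AP_self]; exact ⟨h1, h2, map_zero _⟩
  · rw [AP_ne X h]; exact ⟨(X.NN i).zero_mem, map_zero _, X.p_orth _ _ (Ne.symm h) _⟩

theorem NN_apply (X : TRep k s t) {i : V} {κ : A → X.M} (h : κ ∈ X.NN i) {a : A} (ha : t a = i) :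
    X.p (s a) (κ a) = κ a := by
  have := h a
  simpa only [EE, if_pos ha] using this

theorem NN_apply_ne (X : TRep k s t) {i : V} {κ : A → X.M} (h : κ ∈ X.NN i) {a : A} (ha : t a ≠ i) :
    κ a = 0 := by
  have := h a
  simp only [EE, if_neg ha, LinearMap.zero_apply] at this
  exact this.symm

theorem p_NN (X : TRep k s t) (i : V) (hi : ∀ a, s a ≠ i) {κ : A → X.M} (h : κ ∈ X.NN i) (a : A) :
    X.p i (κ a) = 0 := by
  by_cases ha : t a = i
  · rw [← X.NN_apply h ha]
    exact X.p_orth _ _ (hi a).symm _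
  · rw [X.NN_apply_ne h ha, map_zero]

theorem AX_mem (X : TRep k s t) (i : V) (hi : ∀ a, s a ≠ i) (a : A) (z) (hz : z ∈ X.RM i) :
    X.AX i a z ∈ X.RM i := by
  obtain ⟨h1, h2, h3⟩ := hz
  by_cases h : t a = i
  · rw [AX_eq X h]
    refine ⟨(X.NN i).zero_mem, map_zero _, ?_⟩
    show X.p i (z.1 a) = 0
    rw [← X.NN_apply h1 h]
    exact X.p_orth _ _ (hi a).symm _
  · rw [AX_ne X h]; exact ⟨(X.NN i).zero_mem, map_zero _, X.p_x_ne _ _ (Ne.symm h) _⟩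

/-- projectors of the reflected representation -/
def Rp (X : TRep k s t) (i j : V) : Module.End k (X.RM i) := (X.AP i j).restrict (X.AP_mem i j)

/-- arrows of the reflected representation -/
def Rx (X : TRep k s t) (i : V) (hi : ∀ a, s a ≠ i) (a : A) : Module.End k (X.RM i) :=
  (X.AX i a).restrict (X.AX_mem i hi a)

theorem refl_p (X : TRep k s t) (i : V) (j : V) (z : X.RM i) :
    (X.Rp i j z).1 = X.AP i j z.1 := rfl
theorem refl_x (X : TRep k s t) (i : V) (hi : ∀ a, s a ≠ i) (a : A) (z : X.RM i) :
    (X.Rx i hi a z).1 = X.AX i a z.1 := rfl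

/-- The reflected representation at a sink. -/
def refl (X : TRep k s t) (i : V) (hi : ∀ a, s a ≠ i) :
    TRep k (fun a => if t a = i then t a else s a) (fun a => if t a = i then s a else t a) where
  M := X.RM i
  p j := X.Rp i j
  x a := X.Rx i hi a
  p_sum := by
    rintro ⟨z, hz⟩
    apply Subtype.ext
    simp only [AddSubmonoidClass.coe_finsetSum, refl_p]
    have h3 := hz.2.2
    rw [← Finset.add_sum_erase _ _ (Finset.mem_univ i), AP_self]
    have : ∑ j ∈ Finset.univ.erase i, X.AP i j z = ∑ j ∈ Finset.univ.erase i, (0, X.p j z.2) :=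
      Finset.sum_congr rfl fun j hj => X.AP_ne (Finset.ne_of_mem_erase hj) z
    rw [this]
    have h4 := X.p_sum z.2
    rw [← Finset.add_sum_erase _ _ (Finset.mem_univ i), h3, zero_add] at h4
    apply Prod.ext
    · simp [Prod.fst_sum]
    · rw [Prod.snd_add, Prod.snd_sum, zero_add]; exact h4
  p_idem := by
    rintro j ⟨z, hz⟩
    apply Subtype.ext
    simp only [refl_p, refl_x]
    by_cases h : j = i
    · subst h; simp [AP_self]
    · simp [AP_ne X h, X.p_idem]
  p_orth := by
    rintro j l hjl ⟨z, hz⟩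
    apply Subtype.ext
    simp only [refl_p, refl_x]
    by_cases h : j = i
    · subst h; rw [AP_ne X (Ne.symm hjl), AP_self]; rfl
    · by_cases h' : l = i
      · subst h'; rw [AP_self, AP_ne X h]; simp
      · rw [AP_ne X h, AP_ne X h']; simp [X.p_orth _ _ hjl]
  p_x := by
    rintro a ⟨z, hz⟩
    apply Subtype.ext
    simp only [refl_p, refl_x]
    by_cases h : t a = i
    · simp only [if_pos h]
      rw [AX_eq X h, AP_ne X (hi a)]
      simp [X.NN_apply hz.1 h]
    · simp only [if_neg h]
      rw [AX_ne X h, AP_ne X h]; simp [X.p_x]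
  x_p := by
    rintro a ⟨z, hz⟩
    apply Subtype.ext
    simp only [refl_p, refl_x]
    by_cases h : t a = i
    · simp only [if_pos h]
      rw [AX_eq X h, AX_eq X h, h, AP_self]
    · simp only [if_neg h]
      rw [AX_ne X h, AX_ne X h, AP_ne X (hi a)]; simp [X.x_p]

theorem finrank_NN (X : TRep k s t) (i : V) :
    (Module.finrank k (X.NN i) : ℤ) = ∑ a, if t a = i then X.dim (s a) else 0 := by
  let e : X.NN i ≃ₗ[k] (∀ a, LinearMap.range (X.EE i a)) :=
    { toFun := fun κ a => ⟨κ.1 a, ⟨κ.1 a, κ.2 a⟩⟩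
      invFun := fun κ => ⟨fun a => (κ a).1, fun a => by
        obtain ⟨m, hm⟩ := (κ a).2
        show X.EE i a (κ a).1 = (κ a).1
        rw [← hm, X.EE_idem]⟩
      map_add' := fun _ _ => rfl
      map_smul' := fun _ _ => rfl
      left_inv := fun _ => rfl
      right_inv := fun _ => rfl }
  rw [e.finrank_eq, Module.finrank_pi_fintype]
  push_cast
  refine Finset.sum_congr rfl fun a _ => ?_
  by_cases h : t a = i
  · have h1 : X.EE i a = X.p (s a) := by simp [EE, h]
    rw [h1, if_pos h]; rfl
  · have h1 : X.EE i a = 0 := by simp [EE, h]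
    rw [h1, if_neg h, LinearMap.range_zero, finrank_bot, Nat.cast_zero]

theorem dim_refl_ne (X : TRep k s t) (i : V) (hi : ∀ a, s a ≠ i) (j : V) (h : j ≠ i) :
    (X.refl i hi).dim j = X.dim j := by
  unfold dim
  congr 1
  let e : LinearMap.range (X.Rp i j) ≃ₗ[k] LinearMap.range (X.p j) :=
    { toFun := fun z => ⟨z.1.1.2, by
        obtain ⟨w, hw⟩ := z.2
        rw [← hw, refl_p, AP_ne X h]; exact ⟨_, rfl⟩⟩
      invFun := fun m => ⟨⟨(0, m.1), (X.NN i).zero_mem, map_zero _, by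
          obtain ⟨w, hw⟩ := m.2
          show X.p i m.1 = 0
          rw [← hw, X.p_orth _ _ (Ne.symm h)]⟩, by
          obtain ⟨w, hw⟩ := m.2
          refine ⟨⟨(0, m.1), (X.NN i).zero_mem, map_zero _, ?_⟩, ?_⟩
          · show X.p i m.1 = 0
            rw [← hw, X.p_orth _ _ (Ne.symm h)]
          · apply Subtype.ext
            rw [refl_p, AP_ne X h]
            simp only [← hw, X.p_idem]⟩
      map_add' := fun _ _ => rfl
      map_smul' := fun _ _ => rfl
      left_inv := by
        rintro ⟨z, w, hw⟩
        apply Subtype.ext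
        apply Subtype.ext
        have : z.1.1 = 0 := by rw [← hw, refl_p, AP_ne X h]
        apply Prod.ext
        · exact this.symm
        · rfl
      right_inv := fun _ => rfl }
  exact e.finrank_eq

theorem dim_refl_self (X : TRep k s t) (i : V) (hi : ∀ a, s a ≠ i)
    (hsurj : ∀ m, ∃ κ ∈ X.NN i, X.sig κ = X.p i m) :
    (X.refl i hi).dim i = (∑ a, if t a = i then X.dim (s a) else 0) - X.dim i := by
  let S : X.NN i →ₗ[k] X.M := X.sig ∘ₗ (X.NN i).subtype
  have hr : LinearMap.range S = LinearMap.range (X.p i) := by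
    ext m
    constructor
    · rintro ⟨κ, rfl⟩
      exact ⟨_, X.sig_mem i κ.1 κ.2⟩
    · rintro ⟨m, rfl⟩
      obtain ⟨κ, h1, h2⟩ := hsurj m
      exact ⟨⟨κ, h1⟩, h2⟩
  let e : LinearMap.range (X.Rp i i) ≃ₗ[k] LinearMap.ker S :=
    { toFun := fun z => ⟨⟨z.1.1.1, z.1.2.1⟩, z.1.2.2.1⟩
      invFun := fun κ => ⟨⟨(κ.1.1, 0), κ.1.2, κ.2, map_zero _⟩,
          ⟨(κ.1.1, 0), κ.1.2, κ.2, map_zero _⟩, by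
          apply Subtype.ext
          rw [refl_p, AP_self]⟩
      map_add' := fun _ _ => rfl
      map_smul' := fun _ _ => rfl
      left_inv := by
        rintro ⟨z, w, hw⟩
        apply Subtype.ext
        apply Subtype.ext
        have : z.1.2 = 0 := by rw [← hw, refl_p, AP_self]
        apply Prod.ext
        · rfl
        · exact this.symm
      right_inv := fun _ => rfl }
  have h1 := LinearMap.finrank_range_add_finrank_ker S
  rw [hr, ← e.finrank_eq] at h1
  rw [← finrank_NN, ← h1]
  show (Module.finrank k (LinearMap.range (X.Rp i i)) : ℤ) = _
  unfold dim
  push_cast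
  have : ∀ x y : ℤ, y = x + y - x := fun x y => by ring
  exact this _ _

/-- ambient version of functoriality -/
def AF (X : TRep k s t) (φ : Module.End k X.M) : Module.End k ((A → X.M) × X.M) :=
  LinearMap.prodMap (LinearMap.pi fun a => φ ∘ₗ LinearMap.proj a) φ

theorem AF_apply (X : TRep k s t) (φ : Module.End k X.M) (z) :
    X.AF φ z = (fun a => φ (z.1 a), φ z.2) := rfl

theorem NN_map (X : TRep k s t) (i : V) (φ : Module.End k X.M) (hφ : ∀ j, j ≠ i → ∀ m, φ (X.p j m) = X.p j (φ m))
    (hi : ∀ a, s a ≠ i)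
    (κ) (h : κ ∈ X.NN i) : (fun a => φ (κ a)) ∈ X.NN i := by
  intro a
  show X.EE i a (φ (κ a)) = φ (κ a)
  by_cases ha : t a = i
  · simp only [EE, if_pos ha]
    rw [← hφ _ (hi a), X.NN_apply h ha]
  · simp [EE, if_neg ha, X.NN_apply_ne h ha]

theorem AF_mem (X : TRep k s t) (i : V) (hi : ∀ a, s a ≠ i) (φ : Module.End k X.M) (hφ : X.IsEnd φ)
    (z) (hz : z ∈ X.RM i) : X.AF φ z ∈ X.RM i := by
  refine ⟨X.NN_map i φ (fun j _ => hφ.1 j) hi _ hz.1, ?_, ?_⟩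
  · have h := hz.2.1
    rw [sig_apply] at h ⊢
    have h2 := congrArg φ h
    rw [map_sum, map_zero] at h2
    rw [← h2]
    exact Finset.sum_congr rfl fun a _ => (hφ.2 a _).symm
  · show X.p i (φ z.2) = 0
    rw [← hφ.1, hz.2.2, map_zero]

/-- functoriality of the reflection -/
def RF (X : TRep k s t) (i : V) (hi : ∀ a, s a ≠ i) (φ : Module.End k X.M) (hφ : X.IsEnd φ) :
    Module.End k (X.RM i) := (X.AF φ).restrict (X.AF_mem i hi φ hφ)

theorem RF_isEnd (X : TRep k s t) (i : V) (hi : ∀ a, s a ≠ i) (φ : Module.End k X.M) (hφ : X.IsEnd φ) :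
    (X.refl i hi).IsEnd (X.RF i hi φ hφ) := by
  constructor
  · intro j z
    apply Subtype.ext
    show X.AF φ (X.AP i j z.1) = X.AP i j (X.AF φ z.1)
    by_cases h : j = i
    · subst h; simp only [AP_self, AF_apply, map_zero]
    · simp only [AP_ne X h, AF_apply, hφ.1, Pi.zero_apply, map_zero]; rfl
  · intro a z
    apply Subtype.ext
    show X.AF φ (X.AX i a z.1) = X.AX i a (X.AF φ z.1)
    by_cases h : t a = i
    · simp only [AX_eq X h, AF_apply, Pi.zero_apply, map_zero]; rfl
    · simp only [AX_ne X h, AF_apply, hφ.2, Pi.zero_apply, map_zero]; rfl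

/-- An endomorphism vanishing off `i` is zero. -/
theorem eq_zero_of_off (X : TRep k s t) (i : V) (hi : ∀ a, s a ≠ i)
    (hsurj : ∀ m, ∃ κ ∈ X.NN i, X.sig κ = X.p i m)
    (φ : Module.End k X.M) (hφ : X.IsEnd φ) (h0 : ∀ m, X.p i m = 0 → φ m = 0) : φ = 0 := by
  ext m
  have h1 : φ (X.p i m) = 0 := by
    obtain ⟨κ, h1, h2⟩ := hsurj m
    rw [← h2, sig_apply, map_sum]
    refine Finset.sum_eq_zero fun a _ => ?_
    rw [hφ.2, h0, map_zero]
    exact X.p_NN i hi h1 a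
  have h2 : φ (m - X.p i m) = 0 := h0 _ (by rw [map_sub, X.p_idem, sub_self])
  rw [map_sub, h1, sub_zero] at h2
  simpa using h2

/-- Every endomorphism of the reflection comes from an endomorphism. -/
theorem lift_end (X : TRep k s t) (i : V) (hi : ∀ a, s a ≠ i)
    (hsurj : ∀ m, ∃ κ ∈ X.NN i, X.sig κ = X.p i m)
    (ψ : Module.End k (X.RM i)) (hψ : (X.refl i hi).IsEnd ψ) :
    ∃ (φ : Module.End k X.M) (hφ : X.IsEnd φ), ψ = X.RF i hi φ hφ := by
  have hp : ∀ j (z : X.RM i), ψ (X.Rp i j z) = X.Rp i j (ψ z) := hψ.1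
  have hx : ∀ a (z : X.RM i), ψ (X.Rx i hi a z) = X.Rx i hi a (ψ z) := hψ.2
  let incl : X.M →ₗ[k] X.RM i := LinearMap.codRestrict (X.RM i)
    (LinearMap.inr k (A → X.M) X.M ∘ₗ (LinearMap.id - X.p i)) (by
      intro m
      refine ⟨(X.NN i).zero_mem, map_zero _, ?_⟩
      simp [X.p_idem])
  have incl_apply : ∀ m, (incl m).1 = (0, m - X.p i m) := fun m => rfl
  let ψ0 : Module.End k X.M := LinearMap.snd k _ _ ∘ₗ (X.RM i).subtype ∘ₗ ψ ∘ₗ incl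
  have ψ0_apply : ∀ m, ψ0 m = (ψ (incl m)).1.2 := fun m => rfl
  have hi0 : ∀ m, X.p i (ψ0 m) = 0 := fun m => (ψ (incl m)).2.2.2
  have h0i : ∀ m, ψ0 (X.p i m) = 0 := by
    intro m
    have : incl (X.p i m) = 0 := by
      apply Subtype.ext
      rw [incl_apply, X.p_idem, sub_self]; rfl
    rw [ψ0_apply, this, map_zero]; rfl
  have hb : ∀ z : X.RM i, (ψ z).1.2 = ψ0 z.1.2 := by
    intro z
    have h1 : z = X.Rp i i z + incl z.1.2 := by
      apply Subtype.ext
      show z.1 = (X.Rp i i z).1 + (incl z.1.2).1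
      rw [incl_apply, refl_p, AP_self, z.2.2.2]
      simp
    conv_lhs => rw [h1]
    rw [map_add, hp]
    show (X.Rp i i (ψ z)).1.2 + (ψ (incl z.1.2)).1.2 = _
    rw [refl_p, AP_self, ψ0_apply]
    simp
  have hc : ∀ (z : X.RM i) a, (ψ z).1.1 a = ψ0 (z.1.1 a) := by
    intro z a
    by_cases ha : t a = i
    · have h1 := congrArg (fun w => w.1.2) (hx a z)
      simp only [hb, refl_x, AX_eq X ha] at h1
      exact h1.symm
    · rw [X.NN_apply_ne z.2.1 ha, X.NN_apply_ne (ψ z).2.1 ha, map_zero]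
  have hd : ∀ j, j ≠ i → ∀ m, ψ0 (X.p j m) = X.p j (ψ0 m) := by
    intro j hj m
    have : incl (X.p j m) = X.Rp i j (incl m) := by
      apply Subtype.ext
      rw [incl_apply, refl_p, AP_ne X hj, incl_apply]
      simp [X.p_orth _ _ hj, X.p_orth _ _ (Ne.symm hj)]
    rw [ψ0_apply, this, hp, refl_p, AP_ne X hj]; rfl
  have he : ∀ a, t a ≠ i → ∀ m, ψ0 (X.x a m) = X.x a (ψ0 m) := by
    intro a ha m
    have : incl (X.x a m) = X.Rx i hi a (incl m) := by
      apply Subtype.ext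
      rw [incl_apply, refl_x, AX_ne X ha, incl_apply]
      simp [X.p_x_ne a i (Ne.symm ha), X.x_p_ne a i (hi a)]
    rw [ψ0_apply, this, hx, refl_x, AX_ne X ha]; rfl
  -- the factorization
  let S : X.NN i →ₗ[k] X.M := X.sig ∘ₗ (X.NN i).subtype
  let P : (A → X.M) →ₗ[k] (A → X.M) := LinearMap.pi fun a => ψ0 ∘ₗ LinearMap.proj a
  let T : X.NN i →ₗ[k] X.M := X.sig ∘ₗ P ∘ₗ (X.NN i).subtype
  have hker : LinearMap.ker S ≤ LinearMap.ker T := by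
    intro κ hκ
    have hκ' : X.sig κ.1 = 0 := hκ
    have h1 := (ψ ⟨(κ.1, 0), κ.2, hκ', map_zero _⟩).2.2.1
    show X.sig (fun a => ψ0 (κ.1 a)) = 0
    rw [← h1]
    congr 1
    funext a
    rw [hc]
  obtain ⟨g, hg⟩ : ∃ g : X.M →ₗ[k] X.M, g ∘ₗ S = T := by
    obtain ⟨g, hg⟩ := LinearMap.exists_extend
      ((LinearMap.ker S).liftQ T hker ∘ₗ S.quotKerEquivRange.symm.toLinearMap)
    refine ⟨g, ?_⟩
    ext1 κ
    have h1 := LinearMap.congr_fun hg (S.quotKerEquivRange (Submodule.Quotient.mk κ))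
    simpa using h1
  have hg' : ∀ κ ∈ X.NN i, g (X.sig κ) = X.sig (fun a => ψ0 (κ a)) := fun κ hκ =>
    LinearMap.congr_fun hg ⟨κ, hκ⟩
  have hgi : ∀ m, X.p i (g (X.p i m)) = g (X.p i m) := by
    intro m
    obtain ⟨κ, h1, h2⟩ := hsurj m
    rw [← h2, hg' κ h1]
    exact X.sig_mem i _ (X.NN_map i ψ0 hd hi κ h1)
  let φ : Module.End k X.M := g ∘ₗ X.p i + ψ0
  have φ_apply : ∀ m, φ m = g (X.p i m) + ψ0 m := fun m => rfl
  have hφ : X.IsEnd φ := by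
    constructor
    · intro j m
      by_cases hj : j = i
      · subst hj
        rw [φ_apply, φ_apply, X.p_idem, h0i, map_add, hi0, hgi]
      · rw [φ_apply, φ_apply, X.p_orth _ _ (Ne.symm hj), map_zero, zero_add, map_add, ← hgi,
          X.p_orth _ _ hj, zero_add, hd j hj]
    · intro a m
      have h1 : X.x a (φ m) = X.x a (ψ0 m) := by
        rw [φ_apply, map_add, ← hgi, X.x_p_ne a i (hi a), zero_add]
      rw [h1]
      by_cases ha : t a = i
      · classical
        rw [φ_apply]
        have h2 : X.p i (X.x a m) = X.x a m := by rw [← ha, X.p_x]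
        have h3 : ψ0 (X.x a m) = 0 := by rw [← h2, h0i]
        have hmem : Pi.single a (X.p (s a) m) ∈ X.NN i := by
          intro b
          by_cases hb : b = a
          · subst hb; simp [EE, ha, X.p_idem]
          · simp [hb]
        have h4 := hg' _ hmem
        have h5 : X.sig (Pi.single a (X.p (s a) m)) = X.x a m := by
          rw [sig_apply, Finset.sum_eq_single a]
          · simp [X.x_p]
          · intro b _ hb; simp [hb]
          · simp
        have h6 : X.sig (fun b => ψ0 ((Pi.single a (X.p (s a) m) : A → X.M) b)) = X.x a (ψ0 m) := by
          rw [sig_apply, Finset.sum_eq_single a]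
          · simp [hd _ (hi a), X.x_p]
          · intro b _ hb; simp [hb]
          · simp
        rw [h5, h6] at h4
        rw [h2, h3, add_zero, h4]
      · rw [φ_apply, X.p_x_ne a i (Ne.symm ha), map_zero, zero_add, he a ha]
  refine ⟨φ, hφ, ?_⟩
  ext1 z
  apply Subtype.ext
  show (ψ z).1 = X.AF φ z.1
  rw [AF_apply]
  apply Prod.ext
  · funext a
    rw [hc]
    show _ = φ (z.1.1 a)
    rw [φ_apply, X.p_NN i hi z.2.1, map_zero, zero_add]
  · rw [hb, φ_apply, z.2.2.2, map_zero, zero_add]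

theorem surj_or_brick (X : TRep k s t) (hX : X.Indec) (i : V) (hi : ∀ a, s a ≠ i) :
    X.Brick ∨ ∀ m, ∃ κ ∈ X.NN i, X.sig κ = X.p i m := by
  by_cases h : ∀ m, ∃ κ ∈ X.NN i, X.sig κ = X.p i m
  · exact Or.inr h
  left
  push Not at h
  obtain ⟨m0, h0⟩ := h
  let W : Submodule k X.M := (X.NN i).map X.sig
  have hW : X.p i m0 ∉ W := by
    rintro ⟨κ, h1, h2⟩
    exact h0 κ h1 h2
  obtain ⟨ξ0, hξ1, hξ2⟩ := Submodule.exists_dual_map_eq_bot_of_notMem hW inferInstance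
  have hξW : ∀ w ∈ W, ξ0 w = 0 := by
    intro w hw
    have : ξ0 w ∈ W.map ξ0 := ⟨w, hw, rfl⟩
    rw [hξ2] at this
    simpa using this
  let v : X.M := (ξ0 (X.p i m0))⁻¹ • X.p i m0
  let ξ : X.M →ₗ[k] k := ξ0 ∘ₗ X.p i
  have hpv : X.p i v = v := by simp [v, X.p_idem]
  have hξv : ξ v = 1 := by
    simp only [ξ, LinearMap.comp_apply, hpv]
    simp [v, hξ1]
  have hpvj : ∀ j, j ≠ i → X.p j v = 0 := by
    intro j hj; rw [← hpv, X.p_orth _ _ hj]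
  have hxv : ∀ a, X.x a v = 0 := by
    intro a; rw [← hpv, X.x_p_ne a i (hi a)]
  let e : Module.End k X.M := ξ.smulRight v
  have e_apply : ∀ m, e m = ξ m • v := fun m => rfl
  have hxi : ∀ a m, ξ (X.x a m) = 0 := by
    classical
    intro a m
    show ξ0 (X.p i (X.x a m)) = 0
    by_cases ha : t a = i
    · rw [← ha, X.p_x]
      apply hξW
      refine ⟨Pi.single a (X.p (s a) m), ?_, ?_⟩
      · intro b
        by_cases hb : b = a
        · subst hb; simp [EE, ha, X.p_idem]
        · simp [hb]
      · rw [sig_apply, Finset.sum_eq_single a]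
        · simp [X.x_p]
        · intro b _ hb; simp [hb]
        · simp
    · rw [X.p_x_ne a i (Ne.symm ha), map_zero]
  have hend : X.IsEnd e := by
    constructor
    · intro j m
      by_cases hj : j = i
      · subst hj
        rw [e_apply, e_apply, map_smul, hpv]
        simp [ξ, X.p_idem]
      · rw [e_apply, e_apply, map_smul, hpvj j hj]
        simp [ξ, X.p_orth _ _ (Ne.symm hj)]
    · intro a m
      rw [e_apply, e_apply, map_smul, hxv, hxi]; simp
  have hidem : ∀ m, e (e m) = e m := by
    intro m
    rw [e_apply, e_apply, map_smul, hξv]; simp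
  have hv0 : v ≠ 0 := by
    intro h; rw [h, map_zero] at hξv; exact zero_ne_one hξv
  rcases hX.2 e hend hidem with h | h
  · exfalso
    apply hv0
    have := e_apply v
    rw [h, hξv] at this
    simpa using this.symm
  · intro φ _
    have hm : ∀ m, m = ξ m • v := by
      intro m; rw [← e_apply, h]; rfl
    refine ⟨ξ (φ v), ?_⟩
    ext1 m
    rw [hm m, map_smul]
    conv_lhs => rw [hm (φ v)]
    simp only [LinearMap.smul_apply, Module.End.one_apply]
    rw [smul_comm]

theorem step (X : TRep k s t) (hX : X.Indec) (i : V) (hi : ∀ a, s a ≠ i) :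
    X.Brick ∨ ∃ Y : TRep k (fun a => if t a = i then t a else s a) (fun a => if t a = i then s a else t a),
      Y.Indec ∧ (Y.Brick → X.Brick) ∧ (∀ j, j ≠ i → Y.dim j = X.dim j) ∧
      Y.dim i = (∑ a, if t a = i then X.dim (s a) else 0) - X.dim i := by
  rcases X.surj_or_brick hX i hi with h | hsurj
  · exact Or.inl h
  right
  refine ⟨X.refl i hi, ⟨?_, ?_⟩, ?_, X.dim_refl_ne i hi, X.dim_refl_self i hi hsurj⟩
  · obtain ⟨m, hm⟩ := @exists_ne _ hX.1 (0 : X.M)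
    by_contra hn
    have hs : ∀ z : X.RM i, z = 0 := by
      intro z
      by_contra hz
      exact hn ⟨z, 0, hz⟩
    have h0 : ∀ m, X.p i m = 0 → m = 0 := by
      intro m hm
      have := congrArg (fun z => z.1.2) (hs ⟨(0, m), (X.NN i).zero_mem, map_zero _, hm⟩)
      exact this
    have h1 := X.eq_zero_of_off i hi hsurj 1 ⟨fun _ _ => rfl, fun _ _ => rfl⟩ h0
    exact hm (LinearMap.congr_fun h1 m)
  · intro ψ hψ hidem
    obtain ⟨φ, hφ, rfl⟩ := X.lift_end i hi hsurj ψ hψ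
    have hoff : ∀ m, X.p i m = 0 → φ (φ m) = φ m := by
      intro m hm
      exact congrArg (fun z => z.1.2) (hidem ⟨(0, m), (X.NN i).zero_mem, map_zero _, hm⟩)
    have h1 := X.eq_zero_of_off i hi hsurj (φ * φ - φ)
      ⟨fun j m => by simp [hφ.1], fun a m => by simp [hφ.2]⟩
      (fun m hm => by simp [hoff m hm])
    have h2 : ∀ m, φ (φ m) = φ m := by
      intro m
      have := LinearMap.congr_fun h1 m
      simpa [sub_eq_zero] using this
    rcases hX.2 φ hφ h2 with rfl | rfl
    · left
      rfl
    · right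
      rfl
  · intro hB φ hφ
    obtain ⟨c, hc⟩ := hB _ (X.RF_isEnd i hi φ hφ)
    refine ⟨c, ?_⟩
    have h1 := X.eq_zero_of_off i hi hsurj (φ - c • 1)
      ⟨fun j m => by simp [hφ.1], fun a m => by simp [hφ.2]⟩
      (fun m hm => by
        have := congrArg (fun z => z.1.2) (LinearMap.congr_fun hc
          (⟨(0, m), (X.NN i).zero_mem, map_zero _, hm⟩ : X.RM i))
        have h2 : φ m = c • m := this
        simp [h2])
    exact sub_eq_zero.1 h1

/-- The partially reflected orientation. -/
def sF (s t : A → V) (F : Finset V) (a : A) : V := if t a ∈ F ∧ s a ∉ F then t a else s a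
/-- The partially reflected orientation. -/
def tF (s t : A → V) (F : Finset V) (a : A) : V := if t a ∈ F ∧ s a ∉ F then s a else t a

theorem round_aux (X : TRep k s t) (hX : X.Indec)
    (hacyc : ∀ F : Finset V, F ≠ Finset.univ → ∃ i ∉ F, ∀ a, s a = i → t a ∈ F) (n : ℕ) (hn : n ≤ Fintype.card V) :
    X.Brick ∨ ∃ F : Finset V, F.card = n ∧ (∀ a, s a ∈ F → t a ∈ F) ∧
      ∃ Y : TRep k (sF s t F) (tF s t F), Y.Indec ∧ (Y.Brick → X.Brick) ∧
        (∀ j ∉ F, Y.dim j = X.dim j) ∧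
        (∀ i ∈ F, Y.dim i = (∑ a, if t a = i then X.dim (s a) else 0) +
          (∑ a, if s a = i then Y.dim (t a) else 0) - X.dim i) := by
  induction n with
  | zero =>
    right
    refine ⟨∅, rfl, by simp, ?_⟩
    have h1 : sF s t ∅ = s := by funext a; simp [sF]
    have h2 : tF s t ∅ = t := by funext a; simp [tF]
    rw [h1, h2]
    exact ⟨X, hX, id, fun _ _ => rfl, by simp⟩
  | succ n ih =>
    rcases ih (by omega) with h | ⟨F, hcard, hcl, Y, hY, hB, hd1, hd2⟩
    · exact Or.inl h
    have hFne : F ≠ Finset.univ := by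
      rintro rfl
      rw [Finset.card_univ] at hcard
      omega
    obtain ⟨i, hiF, hi⟩ := hacyc F hFne
    have hsink : ∀ a, sF s t F a ≠ i := by
      intro a ha
      unfold sF at ha
      split_ifs at ha with h
      · exact hiF (ha ▸ h.1)
      · exact h ⟨hi a ha, by rw [ha]; exact hiF⟩
    have htF : ∀ a, tF s t F a = i ↔ (t a = i ∨ s a = i) := by
      intro a
      unfold tF
      split_ifs with h
      · constructor
        · exact Or.inr
        · rintro (h1 | h1)
          · exact absurd (h1 ▸ h.1) hiF
          · exact h1
      · constructor
        · exact Or.inl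
        · rintro (h1 | h1)
          · exact h1
          · exact absurd ⟨hi a h1, by rw [h1]; exact hiF⟩ h
    rcases Y.step hY i hsink with h | ⟨Z, hZ, hBZ, hz1, hz2⟩
    · exact Or.inl (hB h)
    right
    have hcl' : ∀ a, s a ∈ insert i F → t a ∈ insert i F := by
      intro a ha
      rw [Finset.mem_insert] at ha ⊢
      rcases ha with h | h
      · exact Or.inr (hi a h)
      · exact Or.inr (hcl a h)
    refine ⟨insert i F, by rw [Finset.card_insert_of_notMem hiF, hcard], hcl', ?_⟩
    have hts : ∀ a, t a = i → s a ∉ F ∧ s a ≠ i := by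
      intro a ha
      have h1 : s a ∉ F := fun h => hiF (ha ▸ hcl a h)
      refine ⟨h1, fun h => hiF ?_⟩
      have := hi a h
      rwa [ha] at this
    have hs' : sF s t (insert i F) = fun a => if tF s t F a = i then tF s t F a else sF s t F a := by
      funext a
      by_cases h1 : t a = i
      · rw [if_pos ((htF a).2 (Or.inl h1)), (htF a).2 (Or.inl h1)]
        unfold sF
        rw [if_pos]
        · exact h1
        · simp [h1, hts a h1]
      · by_cases h2 : s a = i
        · rw [if_pos ((htF a).2 (Or.inr h2)), (htF a).2 (Or.inr h2)]
          unfold sF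
          rw [if_neg]
          · exact h2
          · simp [h2]
        · rw [if_neg (by rw [htF]; tauto)]
          unfold sF
          simp [h1, h2]
    have ht' : tF s t (insert i F) = fun a => if tF s t F a = i then sF s t F a else tF s t F a := by
      funext a
      by_cases h1 : t a = i
      · rw [if_pos ((htF a).2 (Or.inl h1))]
        unfold tF sF
        rw [if_pos, if_neg]
        · simp [h1, hiF]
        · simp [h1, hts a h1]
      · by_cases h2 : s a = i
        · rw [if_pos ((htF a).2 (Or.inr h2))]
          unfold tF sF
          rw [if_neg, if_pos]
          · exact ⟨hi a h2, by rw [h2]; exact hiF⟩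
          · simp [h2]
        · rw [if_neg (by rw [htF]; tauto)]
          unfold tF
          simp [h1, h2]
    rw [hs', ht']
    refine ⟨Z, hZ, fun h => hB (hBZ h), ?_, ?_⟩
    · intro j hj
      rw [Finset.mem_insert, not_or] at hj
      rw [hz1 j hj.1, hd1 j hj.2]
    · intro j hj
      rw [Finset.mem_insert] at hj
      by_cases hji : j = i
      · subst hji
        rw [hz2, hd1 j hiF]
        congr 1
        rw [← Finset.sum_add_distrib]
        refine Finset.sum_congr rfl fun a _ => ?_
        by_cases h1 : t a = j
        · rw [if_pos ((htF a).2 (Or.inl h1)), if_pos h1, if_neg (hts a h1).2, add_zero]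
          have : sF s t F a = s a := by
            unfold sF; rw [if_neg]; rw [h1]; exact fun h => hiF h.1
          rw [this, hd1 _ (hts a h1).1]
        · by_cases h2 : s a = j
          · rw [if_pos ((htF a).2 (Or.inr h2)), if_neg h1, if_pos h2, zero_add]
            have : sF s t F a = t a := by
              unfold sF; rw [if_pos]; exact ⟨hi a h2, by rw [h2]; exact hiF⟩
            rw [this, hz1 _ h1]
          · rw [if_neg (by rw [htF]; tauto), if_neg h1, if_neg h2, add_zero]
      · have hjF : j ∈ F := hj.resolve_left hji
        rw [hz1 j hji, hd2 j hjF]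
        congr 2
        refine Finset.sum_congr rfl fun a _ => ?_
        by_cases h2 : s a = j
        · rw [if_pos h2, if_pos h2, hz1]
          intro h3
          exact hiF (h3 ▸ hcl a (h2 ▸ hjF))
        · rw [if_neg h2, if_neg h2]

theorem round (X : TRep k s t) (hX : X.Indec)
    (hacyc : ∀ F : Finset V, F ≠ Finset.univ → ∃ i ∉ F, ∀ a, s a = i → t a ∈ F) :
    X.Brick ∨ ∃ Y : TRep k s t, Y.Indec ∧ (Y.Brick → X.Brick) ∧
        ∀ x, EF s t x Y.dim = - EF s t X.dim x := by
  rcases X.round_aux hX hacyc (Fintype.card V) le_rfl with h | ⟨F, hF, -, h⟩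
  · exact Or.inl h
  right
  rw [Finset.card_eq_iff_eq_univ] at hF
  subst hF
  have h1 : sF s t Finset.univ = s := by funext a; simp [sF]
  have h2 : tF s t Finset.univ = t := by funext a; simp [tF]
  rw [h1, h2] at h
  obtain ⟨Y, hY, hB, -, hd⟩ := h
  refine ⟨Y, hY, hB, fun x => ?_⟩
  have h3 : ∀ i, x i * Y.dim i = (∑ a, if t a = i then X.dim (s a) * x i else 0) +
          (∑ a, if s a = i then x i * Y.dim (t a) else 0) - X.dim i * x i := by
    intro i
    rw [hd i (Finset.mem_univ i), mul_sub, mul_add, Finset.mul_sum, Finset.mul_sum]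
    simp only [mul_ite, mul_zero, mul_comm]
  unfold EF
  simp_rw [h3]
  have e1 : ∑ i, ∑ a, (if t a = i then X.dim (s a) * x i else 0) = ∑ a, X.dim (s a) * x (t a) := by
    rw [Finset.sum_comm]; simp
  have e2 : ∑ i, ∑ a, (if s a = i then x i * Y.dim (t a) else 0) = ∑ a, x (s a) * Y.dim (t a) := by
    rw [Finset.sum_comm]; simp
  rw [Finset.sum_sub_distrib, Finset.sum_add_distrib, e1, e2]
  ring

theorem brick_of_neg [Nonempty V] (X : TRep k s t) (hX : X.Indec)
    (hacyc : ∀ F : Finset V, F ≠ Finset.univ → ∃ i ∉ F, ∀ a, s a = i → t a ∈ F)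
    (δ : V → ℤ) (hpos : ∀ i, 0 < δ i)
    (hrad : ∀ x : V → ℤ, (∀ y, EF s t x y + EF s t y x = 0) ↔ ∃ m : ℤ, x = m • δ)
    (hneg : EF s t δ X.dim < 0) : X.Brick := by
  by_contra hB
  have hstep : ∀ Y : {Y : TRep k s t // Y.Indec ∧ ¬ Y.Brick}, ∃ Z : {Y : TRep k s t // Y.Indec ∧ ¬ Y.Brick},
      ∀ x, EF s t x Z.1.dim = - EF s t Y.1.dim x := by
    rintro ⟨Y, hY, hYB⟩
    rcases Y.round hY hacyc with h | ⟨Z, hZ, hZB, hd⟩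
    · exact absurd h hYB
    · exact ⟨⟨Z, hZ, fun h => hYB (hZB h)⟩, hd⟩
  choose f hf using hstep
  let seq : ℕ → {Y : TRep k s t // Y.Indec ∧ ¬ Y.Brick} := fun n => f^[n] ⟨X, hX, hB⟩
  refine no_orbit s t δ hpos hrad (fun n => (seq n).1.dim) (fun n i => Int.natCast_nonneg _) ?_ hneg
  intro n x
  have : seq (n + 1) = f (seq n) := Function.iterate_succ_apply' f n _
  simp only [this]
  exact hf _ x

/-- The transposed endomorphism with respect to a fixed basis. -/
noncomputable def tr {M : Type} [AddCommGroup M] [Module k M] [FiniteDimensional k M]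
    (φ : Module.End k M) : Module.End k M :=
  Matrix.toLin (Module.finBasis k M) (Module.finBasis k M)
    (LinearMap.toMatrix (Module.finBasis k M) (Module.finBasis k M) φ).transpose

section tr
variable {M : Type} [AddCommGroup M] [Module k M] [FiniteDimensional k M]

theorem tr_tr (φ : Module.End k M) : tr (tr φ) = φ := by simp [tr]

theorem tr_mul (φ ψ : Module.End k M) : tr (φ * ψ) = tr ψ * tr φ := by
  simp only [tr, Module.End.mul_eq_comp, LinearMap.toMatrix_comp _ (Module.finBasis k M) _,
    Matrix.transpose_mul, Matrix.toLin_mul _ (Module.finBasis k M) _]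

theorem tr_zero : tr (0 : Module.End k M) = 0 := by simp [tr]

theorem tr_one : tr (1 : Module.End k M) = 1 := by
  simp [tr, Module.End.one_eq_id]

theorem tr_smul (c : k) (φ : Module.End k M) : tr (c • φ) = c • tr φ := by
  simp [tr]

theorem tr_sum {ι : Type} (F : Finset ι) (φ : ι → Module.End k M) :
    tr (∑ i ∈ F, φ i) = ∑ i ∈ F, tr (φ i) := by
  simp [tr, Matrix.transpose_sum]

theorem finrank_tr (φ : Module.End k M) :
    Module.finrank k (LinearMap.range (tr φ)) = Module.finrank k (LinearMap.range φ) := by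
  rw [tr, ← Matrix.rank_eq_finrank_range_toLin, Matrix.rank_transpose,
    Matrix.rank_eq_finrank_range_toLin _ (Module.finBasis k M) (Module.finBasis k M), Matrix.toLin_toMatrix]

end tr

/-- The dual representation. -/
noncomputable def dual (X : TRep k s t) : TRep k t s where
  M := X.M
  p j := tr (X.p j)
  x a := tr (X.x a)
  p_sum := by
    have h : ∑ j, X.p j = 1 := by
      ext1 m; simpa using X.p_sum m
    intro m
    have := LinearMap.congr_fun (congrArg tr h) m
    rw [tr_sum, tr_one] at this
    simpa using this
  p_idem := by
    intro i m
    have h : X.p i * X.p i = X.p i := by ext1 m; exact X.p_idem i m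
    have := LinearMap.congr_fun (congrArg tr h) m
    rwa [tr_mul] at this
  p_orth := by
    intro i j hij m
    have h : X.p j * X.p i = 0 := by ext1 m; exact X.p_orth j i hij.symm m
    have := LinearMap.congr_fun (congrArg tr h) m
    rwa [tr_mul, tr_zero] at this
  p_x := by
    intro a m
    have h : X.x a * X.p (s a) = X.x a := by ext1 m; exact X.x_p a m
    have := LinearMap.congr_fun (congrArg tr h) m
    rwa [tr_mul] at this
  x_p := by
    intro a m
    have h : X.p (t a) * X.x a = X.x a := by ext1 m; exact X.p_x a m
    have := LinearMap.congr_fun (congrArg tr h) m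
    rwa [tr_mul] at this

theorem isEnd_iff (X : TRep k s t) (φ : Module.End k X.M) :
    X.IsEnd φ ↔ (∀ j, φ * X.p j = X.p j * φ) ∧ ∀ a, φ * X.x a = X.x a * φ := by
  constructor
  · rintro ⟨h1, h2⟩
    exact ⟨fun j => LinearMap.ext (h1 j), fun j => LinearMap.ext (h2 j)⟩
  · rintro ⟨h1, h2⟩
    exact ⟨fun j m => LinearMap.congr_fun (h1 j) m, fun j m => LinearMap.congr_fun (h2 j) m⟩

theorem dual_isEnd (X : TRep k s t) (φ : Module.End k X.M) (h : X.IsEnd φ) : X.dual.IsEnd (tr φ) := by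
  rw [isEnd_iff] at h ⊢
  constructor
  · intro j
    show tr φ * tr (X.p j) = tr (X.p j) * tr φ
    rw [← tr_mul, ← tr_mul, h.1]
  · intro j
    show tr φ * tr (X.x j) = tr (X.x j) * tr φ
    rw [← tr_mul, ← tr_mul, h.2]

theorem isEnd_of_dual (X : TRep k s t) (φ : Module.End k X.M) (h : X.dual.IsEnd φ) : X.IsEnd (tr φ) := by
  replace h := (isEnd_iff X.dual φ).1 h
  rw [isEnd_iff]
  constructor
  · intro j
    have h1 : φ * tr (X.p j) = tr (X.p j) * φ := h.1 j
    have := congrArg tr h1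
    rw [tr_mul, tr_mul, tr_tr] at this
    exact this.symm
  · intro j
    have h1 : φ * tr (X.x j) = tr (X.x j) * φ := h.2 j
    have := congrArg tr h1
    rw [tr_mul, tr_mul, tr_tr] at this
    exact this.symm

theorem dual_indec (X : TRep k s t) (hX : X.Indec) : X.dual.Indec := by
  refine ⟨hX.1, fun (φ : Module.End k X.M) hφ hidem => ?_⟩
  have h1 : φ * φ = φ := LinearMap.ext hidem
  have h2 := congrArg tr h1
  rw [tr_mul] at h2
  rcases hX.2 (tr φ) (X.isEnd_of_dual φ hφ) (fun m => LinearMap.congr_fun h2 m) with h | h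
  · left
    have := congrArg tr h
    rwa [tr_tr, tr_zero] at this
  · right
    have := congrArg tr h
    rwa [tr_tr, tr_one] at this

theorem brick_of_dual (X : TRep k s t) (hX : X.dual.Brick) : X.Brick := by
  intro φ hφ
  obtain ⟨c, hc⟩ := hX (tr φ) (X.dual_isEnd φ hφ)
  refine ⟨c, ?_⟩
  have hc' : tr φ = c • (1 : Module.End k X.M) := hc
  have := congrArg tr hc'
  rwa [tr_tr, tr_smul, tr_one] at this

theorem dual_dim (X : TRep k s t) : X.dual.dim = X.dim := by
  funext j
  show (Module.finrank k (LinearMap.range (tr (X.p j))) : ℤ) = _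
  rw [finrank_tr]; rfl

theorem brick_of_ne [Nonempty V] (X : TRep k s t) (hX : X.Indec)
    (hacyc : ∀ F : Finset V, F ≠ Finset.univ → ∃ i ∉ F, ∀ a, s a = i → t a ∈ F)
    (hacyc' : ∀ F : Finset V, F ≠ Finset.univ → ∃ i ∉ F, ∀ a, t a = i → s a ∈ F)
    (δ : V → ℤ) (hpos : ∀ i, 0 < δ i)
    (hrad : ∀ x : V → ℤ, (∀ y, EF s t x y + EF s t y x = 0) ↔ ∃ m : ℤ, x = m • δ)
    (hne : EF s t δ X.dim ≠ 0) : X.Brick := by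
  rcases lt_or_gt_of_ne hne with h | h
  · exact X.brick_of_neg hX hacyc δ hpos hrad h
  · apply X.brick_of_dual
    refine X.dual.brick_of_neg (X.dual_indec hX) hacyc' δ hpos ?_ ?_
    · intro x
      rw [← hrad]
      refine forall_congr' fun y => ?_
      rw [EF_swap s t, EF_swap s t, add_comm]
    · rw [dual_dim, EF_swap s t]
      have := (hrad δ).2 ⟨1, by simp⟩ X.dim
      omega

end TRep
end TotalRep
section Conclusion

theorem iterate_periodic {β : Type} [Finite β] [Nonempty β] (f : β → β) :
    ∃ (y : β) (n : ℕ), f^[n + 1] y = y := by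
  obtain ⟨y0⟩ := ‹Nonempty β›
  obtain ⟨m, n, hmn, h⟩ := Finite.exists_ne_map_eq_of_infinite (fun n : ℕ => f^[n] y0)
  wlog hlt : m < n generalizing m n
  · exact this n m hmn.symm h.symm (by omega)
  refine ⟨f^[m] y0, n - m - 1, ?_⟩
  rw [← Function.iterate_add_apply]
  have : n - m - 1 + 1 + m = n := by omega
  rw [this]
  exact h.symm

theorem exists_sink (Q : FinQuiver) (hQ : Q.Acyclic) (F : Finset Q.V) (hF : F ≠ Finset.univ) :
    ∃ i ∉ F, ∀ a, Q.src a = i → Q.tgt a ∈ F := by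
  by_contra hcon
  push Not at hcon
  have hne : Nonempty {i // i ∉ F} := by
    by_contra h
    apply hF
    ext i
    simp only [Finset.mem_univ, iff_true]
    by_contra hi
    exact h ⟨i, hi⟩
  choose g hg1 hg2 using hcon
  let f : {i // i ∉ F} → {i // i ∉ F} := fun i => ⟨Q.tgt (g i.1 i.2), hg2 i.1 i.2⟩
  obtain ⟨y, n, hy⟩ := iterate_periodic f
  apply hQ
  refine ⟨n, fun j => g (f^[j.val] y).1 (f^[j.val] y).2, fun j => ?_⟩
  have h1 : ∀ z : {i // i ∉ F}, Q.tgt (g z.1 z.2) = (f z).1 := fun z => rfl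
  rw [h1, hg1, ← Function.iterate_succ_apply' f]
  congr 1
  by_cases hj : j = Fin.last n
  · subst hj
    simp only [Fin.last_add_one, Fin.val_last, Fin.val_zero, Function.iterate_zero, id]
    exact hy
  · rw [Fin.val_add_one_of_lt (Fin.lt_last_iff_ne_last.2 hj)]

theorem exists_source (Q : FinQuiver) (hQ : Q.Acyclic) (F : Finset Q.V) (hF : F ≠ Finset.univ) :
    ∃ i ∉ F, ∀ a, Q.tgt a = i → Q.src a ∈ F := by
  by_contra hcon
  push Not at hcon
  have hne : Nonempty {i // i ∉ F} := by
    by_contra h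
    apply hF
    ext i
    simp only [Finset.mem_univ, iff_true]
    by_contra hi
    exact h ⟨i, hi⟩
  choose g hg1 hg2 using hcon
  let f : {i // i ∉ F} → {i // i ∉ F} := fun i => ⟨Q.src (g i.1 i.2), hg2 i.1 i.2⟩
  obtain ⟨y, n, hy⟩ := iterate_periodic f
  apply hQ
  refine ⟨n, fun j => g (f^[n - j.val] y).1 (f^[n - j.val] y).2, fun j => ?_⟩
  have h1 : ∀ z : {i // i ∉ F}, Q.src (g z.1 z.2) = (f z).1 := fun z => rfl
  rw [h1, hg1, ← Function.iterate_succ_apply' f]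
  congr 1
  by_cases hj : j = Fin.last n
  · subst hj
    simp only [Fin.last_add_one, Fin.val_last, Fin.val_zero, Nat.sub_self, Nat.sub_zero,
      Function.iterate_zero, id]
    exact hy.symm
  · have hlt := Fin.lt_last_iff_ne_last.2 hj
    rw [Fin.val_add_one_of_lt hlt]
    have h2 : j.val < n := hlt
    have h3 : (n - (j.val + 1)).succ = n - j.val := by omega
    rw [h3]

variable {Q : FinQuiver} {k : Type} [Field k]

/-- The total representation of a quiver representation. -/
def QRep.total (X : QRep Q k) : TRep k Q.src Q.tgt where
  M := ∀ i, X.carrier i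
  p j := LinearMap.single k X.carrier j ∘ₗ LinearMap.proj j
  x a := arrowEnd X a
  p_sum := by
    intro m
    simpa using Finset.univ_sum_single m
  p_idem := by intro i m; simp
  p_orth := by
    intro i j hij m
    simp [Pi.single_eq_of_ne hij]
  p_x := by intro a m; simp [arrowEnd]
  x_p := by intro a m; simp [arrowEnd]

theorem total_dim (X : QRep Q k) : X.total.dim = X.dimVec := by
  funext j
  show (Module.finrank k (LinearMap.range (LinearMap.single k X.carrier j ∘ₗ LinearMap.proj j)) : ℤ)
    = (Module.finrank k (X.carrier j) : ℤ)
  rw [LinearMap.range_comp_of_range_eq_top _ (LinearMap.range_eq_top.2 (LinearMap.proj_surjective j)),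
    LinearMap.finrank_range_of_inj (LinearMap.ker_eq_bot.1 (LinearMap.ker_single k X.carrier j))]

theorem total_indec (X : QRep Q k) (hX : X.Indecomposable) : X.total.Indec := by
  constructor
  · obtain ⟨⟨i, hi⟩, -⟩ := hX
    have : Nontrivial (X.carrier i) := Module.nontrivial_of_finrank_pos hi
    obtain ⟨v, hv⟩ := exists_ne (0 : X.carrier i)
    refine ⟨(Pi.single i v : ∀ i, X.carrier i), (0 : ∀ i, X.carrier i), fun h => hv ?_⟩
    simpa using congrFun h i
  · intro φ0 hφ hidem
    let φ : Module.End k (∀ i, X.carrier i) := φ0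
    have hp : ∀ j (m : ∀ i, X.carrier i), φ (Pi.single j (m j)) = Pi.single j (φ m j) := hφ.1
    have hx : ∀ a (m : ∀ i, X.carrier i), φ (Pi.single (Q.tgt a) (X.map a (m (Q.src a))))
      = Pi.single (Q.tgt a) (X.map a (φ m (Q.src a))) := hφ.2
    have hid : ∀ m : ∀ i, X.carrier i, φ (φ m) = φ m := hidem
    let f : ∀ i, X.carrier i →ₗ[k] X.carrier i := fun i =>
      LinearMap.proj i ∘ₗ φ ∘ₗ LinearMap.single k X.carrier i
    have f_apply : ∀ i v, f i v = φ (Pi.single i v) i := fun i v => rfl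
    have hf : ∀ i (m : ∀ i, X.carrier i), φ m i = f i (m i) := by
      intro i m
      rw [f_apply, hp]; simp
    have hff : ∀ i v, f i (f i v) = f i v := by
      intro i v
      have := congrFun (hid (Pi.single i v)) i
      rw [hf, hf] at this
      simpa using this
    have hfx : ∀ a v, f (Q.tgt a) (X.map a v) = X.map a (f (Q.src a) v) := by
      intro a v
      have := congrFun (hx a (Pi.single (Q.src a) v)) (Q.tgt a)
      rw [hf] at this
      simpa [hf] using this
    let U : SubRep X := ⟨fun i => LinearMap.range (f i), by
      rintro a _ ⟨v, rfl⟩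
      exact ⟨X.map a v, hfx a v⟩⟩
    let W : SubRep X := ⟨fun i => LinearMap.ker (f i), by
      intro a v hv
      rw [LinearMap.mem_ker] at hv ⊢
      rw [hfx, hv, map_zero]⟩
    have hc : ∀ i, IsCompl (U.mod i) (W.mod i) := by
      intro i
      have : IsIdempotentElem (f i) := LinearMap.ext (hff i)
      exact LinearMap.IsIdempotentElem.isCompl this
    rcases hX.2 U W hc with h | h
    · left
      have : φ = 0 := by
        refine LinearMap.ext fun m => ?_
        funext i
        rw [hf]
        have h1 : f i (m i) ∈ U.mod i := ⟨m i, rfl⟩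
        rw [h i] at h1
        exact h1
      exact this
    · right
      have : φ = 1 := by
        refine LinearMap.ext fun m => ?_
        funext i
        rw [hf]
        have h1 : f i (m i) - m i ∈ W.mod i := by
          show f i _ = 0
          rw [map_sub, hff, sub_self]
        rw [h i] at h1
        exact sub_eq_zero.1 h1
      exact this

end Conclusion

/-- Every indecomposable representation of an affine quiver over an algebraically closed
field whose dimension vector has nonzero defect (i.e. every preprojective or preinjective
indecomposable) is a brick: `End(X) = k · id`. -/
theorem nonzero_defect_indecomposable_is_brick
    (Q : AffineQuiver) (k : Type) [Field k] [IsAlgClosed k]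
    (X : QRep Q.toFinQuiver k) (hX : X.Indecomposable)
    (hdef : Q.defect X.dimVec ≠ 0) :
    ∀ f ∈ endSubmodule X, ∃ c : k, ∀ i, f i = c • LinearMap.id := by
  intro f hf
  have : Nonempty Q.V := Q.connected.nonempty
  have hB : X.total.Brick := by
    refine X.total.brick_of_ne (total_indec X hX) (exists_sink _ Q.acyclic) (exists_source _ Q.acyclic)
      Q.δ Q.delta_pos Q.radical_iff ?_
    rw [total_dim]
    exact hdef
  let φ : Module.End k (∀ i, X.carrier i) := LinearMap.pi fun i => f i ∘ₗ LinearMap.proj i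
  have hφ : ∀ m i, φ m i = f i (m i) := fun _ _ => rfl
  obtain ⟨c, hc⟩ := hB φ (by
    constructor
    · intro j (m : ∀ i, X.carrier i)
      show φ (Pi.single j (m j)) = Pi.single j (φ m j)
      funext i
      rw [hφ, hφ]
      by_cases h : i = j
      · subst h; simp
      · simp [Pi.single_eq_of_ne h]
    · intro a (m : ∀ i, X.carrier i)
      show φ (Pi.single (Q.tgt a) (X.map a (m (Q.src a))))
        = Pi.single (Q.tgt a) (X.map a (φ m (Q.src a)))
      funext i
      rw [hφ, hφ]
      by_cases h : i = Q.tgt a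
      · subst h
        have := LinearMap.congr_fun (hf a) (m (Q.src a))
        simpa using this
      · simp [Pi.single_eq_of_ne h])
  refine ⟨c, fun i => ?_⟩
  refine LinearMap.ext fun v => ?_
  have h1 := congrFun (LinearMap.congr_fun hc (Pi.single i v : ∀ i, X.carrier i)) i
  have h2 : φ (Pi.single i v) i = c • (Pi.single i v : ∀ i, X.carrier i) i := h1
  rw [hφ] at h2
  simpa using h2
end

section
/- Let Q be an affine quiver with affine Coxeter transformation c, and let α ∈ ℤ^{Q_0} be a root (α ≠ 0 and q(α) ≤ 1). Then α is regular, i.e., there exists an integer N ≥ 1 with c^N·α = α, if and only if the defect vanishes: ∂(α) = e(δ, α) = 0. -/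
open scoped BigOperators

namespace FinQuiver

variable (Q : FinQuiver)

lemma ef_add_left (x y z : Q.V → ℤ) :
    Q.eulerForm (x + y) z = Q.eulerForm x z + Q.eulerForm y z := by
  simp only [eulerForm, Pi.add_apply, add_mul, Finset.sum_add_distrib]; ring

lemma ef_add_right (x y z : Q.V → ℤ) :
    Q.eulerForm x (y + z) = Q.eulerForm x y + Q.eulerForm x z := by
  simp only [eulerForm, Pi.add_apply, mul_add, Finset.sum_add_distrib]; ring

lemma ef_smul_left (m : ℤ) (x y : Q.V → ℤ) :
    Q.eulerForm (m • x) y = m * Q.eulerForm x y := by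
  simp only [eulerForm, Pi.smul_apply, smul_eq_mul, mul_sub, Finset.mul_sum, mul_assoc]

lemma ef_smul_right (m : ℤ) (x y : Q.V → ℤ) :
    Q.eulerForm x (m • y) = m * Q.eulerForm x y := by
  simp only [eulerForm, Pi.smul_apply, smul_eq_mul, mul_sub, Finset.mul_sum, mul_left_comm]

lemma ef_sum_right {ι : Type} (s : Finset ι) (x : Q.V → ℤ) (f : ι → Q.V → ℤ) :
    Q.eulerForm x (∑ k ∈ s, f k) = ∑ k ∈ s, Q.eulerForm x (f k) := by
  classical
  induction s using Finset.induction_on with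
  | empty => simp [eulerForm]
  | insert a s ha ih => rw [Finset.sum_insert ha, Finset.sum_insert ha, ef_add_right, ih]

lemma ef_single_of_sink (i : Q.V) (hi : ∀ a, Q.src a ≠ i) (y : Q.V → ℤ) :
    Q.eulerForm (Pi.single i 1) y = y i := by
  unfold eulerForm
  have : ∑ a : Q.A, (Pi.single i 1 : Q.V → ℤ) (Q.src a) * y (Q.tgt a) = 0 := by
    apply Finset.sum_eq_zero
    intro a _
    rw [Pi.single_eq_of_ne (hi a), zero_mul]
  rw [this]
  simp [Pi.single_apply]

lemma exists_sink [Nonempty Q.V] (h : Q.Acyclic) : ∃ i, ∀ a, Q.src a ≠ i := by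
  by_contra hcon
  push Not at hcon
  choose f hf using hcon
  let g : Q.V → Q.V := fun i => Q.tgt (f i)
  obtain ⟨v0⟩ := ‹Nonempty Q.V›
  have hper : ∃ (n : ℕ) (v : Q.V), g^[n + 1] v = v := by
    obtain ⟨a, b, hab, he⟩ := Finite.exists_ne_map_eq_of_infinite (fun n : ℕ => g^[n] v0)
    wlog hlt : a < b generalizing a b
    · exact this b a hab.symm he.symm (by omega)
    obtain ⟨d, rfl⟩ := Nat.exists_eq_add_of_lt hlt
    refine ⟨d, g^[a] v0, ?_⟩
    have hd : d + 1 + a = a + d + 1 := by omega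
    rw [← Function.iterate_add_apply, hd]
    exact he.symm
  obtain ⟨n, v, hv⟩ := hper
  refine h ⟨n, fun k => f (g^[k] v), fun k => ?_⟩
  rw [hf]
  have h1 : Q.tgt (f (g^[(k : ℕ)] v)) = g^[(k : ℕ) + 1] v := by
    rw [Function.iterate_succ_apply']
  rw [h1]
  by_cases hk : k = Fin.last n
  · subst hk
    simp [hv]
  · rw [Fin.val_add_one_of_lt (Fin.lt_last_iff_ne_last.2 hk)]

end FinQuiver

namespace AffineQuiver

open FinQuiver

variable (Q : AffineQuiver)

lemma rad (y : Q.V → ℤ) : Q.eulerForm Q.δ y = - Q.eulerForm y Q.δ := by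
  have := (Q.radical_iff Q.δ).2 ⟨1, by simp⟩ y
  linarith

lemma ef_delta_delta : Q.eulerForm Q.δ Q.δ = 0 := by
  have := Q.rad Q.δ
  linarith

lemma tits_add_smul_delta (y : Q.V → ℤ) (m : ℤ) :
    Q.titsForm (y + m • Q.δ) = Q.titsForm y := by
  simp only [titsForm, ef_add_left, ef_add_right, ef_smul_left, ef_smul_right,
    ef_delta_delta, Q.rad y]
  ring

lemma null_of_right_rad (v : Q.V → ℤ) (hv : ∀ z, Q.eulerForm z v = 0) : v = 0 := by
  have hne : Nonempty Q.V := Q.connected.nonempty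
  have h1 : ∀ z, Q.eulerForm v z + Q.eulerForm z v = 0 := by
    intro z
    rw [hv z, add_zero]
    have hps : ∀ n : ℤ, 0 ≤ n * Q.eulerForm v z + Q.titsForm z := by
      intro n
      have := Q.posSemidef (n • v + z)
      simp only [titsForm, ef_add_left, ef_add_right, ef_smul_left, ef_smul_right, hv] at this
      simp only [titsForm]
      linarith
    have h2 := hps (- Q.eulerForm v z * (Q.titsForm z + 1))
    have h3 := Q.posSemidef z
    by_contra hb
    have h4 : 1 ≤ Q.eulerForm v z ^ 2 := by
      have : 0 < Q.eulerForm v z ^ 2 := by positivity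
      omega
    nlinarith
  obtain ⟨m, rfl⟩ := (Q.radical_iff v).1 h1
  obtain ⟨i, hi⟩ := Q.exists_sink Q.acyclic
  have h2 := hv (Pi.single i 1)
  rw [ef_smul_right, ef_single_of_sink _ _ hi] at h2
  have := Q.delta_pos i
  have hm : m = 0 := by
    rcases mul_eq_zero.1 h2 with h | h
    · exact h
    · omega
  simp [hm]

/-- sum of squares formula -/
lemma sq_formula (D : ℤ) (w : Q.V → ℤ) (hw : ∀ i, w i * Q.δ i = D) (y : Q.V → ℤ) :
    2 * D ^ 2 * Q.titsForm y = ∑ a : Q.A, Q.δ (Q.src a) * Q.δ (Q.tgt a) *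
      (w (Q.tgt a) * y (Q.tgt a) - w (Q.src a) * y (Q.src a)) ^ 2 := by
  have h := Q.rad (fun i => w i * y i ^ 2)
  unfold eulerForm at h
  have e1 : ∑ i, Q.δ i * (w i * y i ^ 2) = D * ∑ i, y i * y i := by
    rw [Finset.mul_sum]
    refine Finset.sum_congr rfl fun i _ => ?_
    rw [← hw i]; ring
  have e2 : ∑ i, w i * y i ^ 2 * Q.δ i = D * ∑ i, y i * y i := by
    rw [← e1]
    refine Finset.sum_congr rfl fun i _ => ?_
    ring
  rw [e1, e2] at h
  have e3 : ∑ a : Q.A, Q.δ (Q.src a) * Q.δ (Q.tgt a) *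
      (w (Q.tgt a) * y (Q.tgt a) - w (Q.src a) * y (Q.src a)) ^ 2 =
      D * (∑ a : Q.A, Q.δ (Q.src a) * (w (Q.tgt a) * y (Q.tgt a) ^ 2)) +
      D * (∑ a : Q.A, w (Q.src a) * y (Q.src a) ^ 2 * Q.δ (Q.tgt a)) -
      2 * D ^ 2 * ∑ a : Q.A, y (Q.src a) * y (Q.tgt a) := by
    simp only [Finset.mul_sum]
    rw [← Finset.sum_add_distrib, ← Finset.sum_sub_distrib]
    refine Finset.sum_congr rfl fun a _ => ?_
    have hs := hw (Q.src a)
    have ht := hw (Q.tgt a)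
    have hD : D ^ 2 = (w (Q.src a) * Q.δ (Q.src a)) * (w (Q.tgt a) * Q.δ (Q.tgt a)) := by
      rw [hs, ht]; ring
    have h1 : D * (Q.δ (Q.src a) * (w (Q.tgt a) * y (Q.tgt a) ^ 2)) =
      (w (Q.tgt a) * Q.δ (Q.tgt a)) * (Q.δ (Q.src a) * (w (Q.tgt a) * y (Q.tgt a) ^ 2)) := by
      rw [ht]
    have h2 : D * (w (Q.src a) * y (Q.src a) ^ 2 * Q.δ (Q.tgt a)) =
      (w (Q.src a) * Q.δ (Q.src a)) * (w (Q.src a) * y (Q.src a) ^ 2 * Q.δ (Q.tgt a)) := by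
      rw [hs]
    rw [h1, h2, hD]
    ring
  rw [e3]
  unfold titsForm eulerForm
  linear_combination D * h

lemma arrow_bound (D : ℤ) (hD : 0 < D) (w : Q.V → ℤ) (hw : ∀ i, w i * Q.δ i = D)
    (y : Q.V → ℤ) (hy : Q.titsForm y ≤ 1) (a : Q.A) :
    |w (Q.tgt a) * y (Q.tgt a) - w (Q.src a) * y (Q.src a)| ≤ 2 * D := by
  have h := Q.sq_formula D w hw y
  have h1 := Finset.single_le_sum (f := fun a : Q.A => Q.δ (Q.src a) * Q.δ (Q.tgt a) *
      (w (Q.tgt a) * y (Q.tgt a) - w (Q.src a) * y (Q.src a)) ^ 2) (s := Finset.univ)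
      (fun a _ => mul_nonneg (mul_nonneg (Q.delta_pos _).le (Q.delta_pos _).le) (sq_nonneg _))
      (Finset.mem_univ a)
  rw [← h] at h1
  have hs := Q.delta_pos (Q.src a)
  have ht := Q.delta_pos (Q.tgt a)
  have h2 : 1 ≤ Q.δ (Q.src a) * Q.δ (Q.tgt a) := by
    have : 0 < Q.δ (Q.src a) * Q.δ (Q.tgt a) := by positivity
    omega
  have hD2 : 0 < D ^ 2 := by positivity
  apply abs_le_of_sq_le_sq _ (by positivity)
  nlinarith [sq_nonneg (w (Q.tgt a) * y (Q.tgt a) - w (Q.src a) * y (Q.src a)), 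
    mul_nonneg (sub_nonneg.2 h2) 
      (sq_nonneg (w (Q.tgt a) * y (Q.tgt a) - w (Q.src a) * y (Q.src a))),
    mul_nonneg hD2.le (sub_nonneg.2 hy)]

lemma finite_roots (i0 : Q.V) :
    {y : Q.V → ℤ | Q.titsForm y ≤ 1 ∧ |y i0| ≤ Q.δ i0}.Finite := by
  classical
  let D : ℤ := ∏ i, Q.δ i
  let w : Q.V → ℤ := fun i => ∏ j ∈ Finset.univ.erase i, Q.δ j
  have hD : 0 < D := Finset.prod_pos fun i _ => Q.delta_pos i
  have hw : ∀ i, w i * Q.δ i = D := fun i =>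
    Finset.prod_erase_mul _ _ (Finset.mem_univ i)
  have hw1 : ∀ i, 0 < w i := fun i => Finset.prod_pos fun i _ => Q.delta_pos i
  have key : ∀ i, ∃ B : ℤ, ∀ y : Q.V → ℤ, Q.titsForm y ≤ 1 → |y i0| ≤ Q.δ i0 →
      |w i * y i| ≤ B := by
    intro i
    obtain ⟨p⟩ := Q.connected.preconnected i i0
    induction p with
    | nil =>
      rename_i u
      refine ⟨w u * Q.δ u, fun y _ hy => ?_⟩
      rw [abs_mul, abs_of_pos (hw1 u)]
      exact mul_le_mul_of_nonneg_left hy (hw1 u).le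
    | cons hadj p ih =>
      obtain ⟨B, hB⟩ := ih
      refine ⟨B + 2 * D, fun y hy hy0 => ?_⟩
      have hb := hB y hy hy0
      obtain ⟨-, a, h⟩ := hadj
      have ha := Q.arrow_bound D hD w hw y hy a
      rcases h with ⟨h1, h2⟩ | ⟨h1, h2⟩ <;> rw [h1, h2] at ha <;>
        rw [abs_le] at * <;> constructor <;> linarith [ha.1, ha.2, hb.1, hb.2]
  choose B hB using key
  refine (Set.finite_Icc (-B) B).subset ?_
  rintro y ⟨hy, hy0⟩
  have : ∀ i, |y i| ≤ B i := by
    intro i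
    have h := hB i y hy hy0
    rw [abs_mul, abs_of_pos (hw1 i)] at h
    have := hw1 i
    nlinarith [abs_nonneg (y i)]
  exact ⟨fun i => (abs_le.1 (this i)).1, fun i => (abs_le.1 (this i)).2⟩

lemma c_delta (c : (Q.V → ℤ) ≃ₗ[ℤ] (Q.V → ℤ))
    (hc : ∀ x y : Q.V → ℤ, Q.eulerForm x y = - Q.eulerForm y (c x)) : c Q.δ = Q.δ := by
  rw [← sub_eq_zero]
  apply Q.null_of_right_rad
  intro z
  have h1 := hc Q.δ z
  have h2 := Q.rad z
  have : c Q.δ - Q.δ = c Q.δ + (-1 : ℤ) • Q.δ := by simp [sub_eq_add_neg]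
  rw [this, ef_add_right, ef_smul_right]
  linarith

lemma pow_delta (c : (Q.V → ℤ) ≃ₗ[ℤ] (Q.V → ℤ))
    (hc : ∀ x y : Q.V → ℤ, Q.eulerForm x y = - Q.eulerForm y (c x)) (N : ℕ) : (c ^ N) Q.δ = Q.δ := by
  induction N with
  | zero => simp
  | succ n ih => rw [pow_succ, LinearEquiv.mul_apply, Q.c_delta c hc, ih]

lemma pow_ef (c : (Q.V → ℤ) ≃ₗ[ℤ] (Q.V → ℤ))
    (hc : ∀ x y : Q.V → ℤ, Q.eulerForm x y = - Q.eulerForm y (c x)) (N : ℕ) (x y : Q.V → ℤ) :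
    Q.eulerForm ((c ^ N) x) ((c ^ N) y) = Q.eulerForm x y := by
  induction N with
  | zero => simp
  | succ n ih =>
    rw [pow_succ', LinearEquiv.mul_apply, LinearEquiv.mul_apply, ← ih]
    have h1 := hc ((c ^ n) x) ((c ^ n) y)
    have h2 := hc ((c ^ n) y) (c ((c ^ n) x))
    linarith

lemma exists_period (c : (Q.V → ℤ) ≃ₗ[ℤ] (Q.V → ℤ))
    (hc : ∀ x y : Q.V → ℤ, Q.eulerForm x y = - Q.eulerForm y (c x)) (y : Q.V → ℤ) (hy : Q.titsForm y ≤ 1) :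
    ∃ N : ℕ, 1 ≤ N ∧ ∃ m : ℤ, (c ^ N) y = y + m • Q.δ := by
  obtain ⟨i0⟩ := Q.connected.nonempty
  let r : ℕ → ℤ := fun k => - ((c ^ k) y i0 / Q.δ i0)
  let F : ℕ → Q.V → ℤ := fun k => (c ^ k) y + r k • Q.δ
  have hmaps : Set.MapsTo F Set.univ {y : Q.V → ℤ | Q.titsForm y ≤ 1 ∧ |y i0| ≤ Q.δ i0} := by
    intro k _
    constructor
    · have h := Q.pow_ef c hc k y y
      rw [Q.tits_add_smul_delta]
      unfold titsForm at *
      rw [h]; exact hy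
    · have h0 := Q.delta_pos i0
      have e : F k i0 = (c ^ k) y i0 % Q.δ i0 := by
        have := Int.emod_add_mul_ediv ((c ^ k) y i0) (Q.δ i0)
        simp only [F, r, Pi.add_apply, Pi.smul_apply, smul_eq_mul]
        linarith
      rw [e, abs_of_nonneg (Int.emod_nonneg _ h0.ne')]
      exact (Int.emod_lt_of_pos _ h0).le
  obtain ⟨a, -, b, -, hab, he⟩ :=
    Set.infinite_univ.exists_ne_map_eq_of_mapsTo hmaps (Q.finite_roots i0)
  wlog hlt : a < b generalizing a b
  · exact this b a hab.symm he.symm (by omega)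
  obtain ⟨d, rfl⟩ := Nat.exists_eq_add_of_lt hlt
  refine ⟨d + 1, by omega, r a - r (a + d + 1), ?_⟩
  apply (c ^ a).injective
  simp only [F] at he
  rw [map_add, map_smul, Q.pow_delta c hc, ← LinearEquiv.mul_apply, ← pow_add, sub_smul]
  rw [add_assoc a d 1] at he ⊢
  rw [← add_sub_assoc, he]
  abel

lemma pow_mul_period (c : (Q.V → ℤ) ≃ₗ[ℤ] (Q.V → ℤ))
    (hc : ∀ x y : Q.V → ℤ, Q.eulerForm x y = - Q.eulerForm y (c x)) (y : Q.V → ℤ) (N : ℕ) (m : ℤ) (h : (c ^ N) y = y + m • Q.δ) (k : ℕ) :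
    (c ^ (N * k)) y = y + (k * m) • Q.δ := by
  induction k with
  | zero => simp
  | succ n ih =>
    rw [Nat.mul_succ, pow_add, LinearEquiv.mul_apply, h, map_add, map_smul,
      Q.pow_delta c hc, ih]
    push_cast
    rw [add_mul, add_smul, one_mul, add_assoc]

lemma defect_pow (c : (Q.V → ℤ) ≃ₗ[ℤ] (Q.V → ℤ))
    (hc : ∀ x y : Q.V → ℤ, Q.eulerForm x y = - Q.eulerForm y (c x)) (N : ℕ) (y : Q.V → ℤ) : Q.eulerForm Q.δ ((c ^ N) y) = Q.eulerForm Q.δ y := by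
  have := Q.pow_ef c hc N Q.δ y
  rwa [Q.pow_delta c hc] at this

end AffineQuiver

open FinQuiver

/-- A root `x` of an affine quiver is regular (the affine Coxeter transformation `c`
acts periodically on it) if and only if its defect vanishes: `∂(x) = e(δ, x) = 0`. -/
theorem regular_root_iff_defect_zero
    (Q : AffineQuiver) (c : (Q.V → ℤ) ≃ₗ[ℤ] (Q.V → ℤ))
    (hc : ∀ x y : Q.V → ℤ, Q.eulerForm x y = - Q.eulerForm y (c x))
    (x : Q.V → ℤ) (hx0 : x ≠ 0) (hroot : Q.titsForm x ≤ 1) :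
    (∃ N : ℕ, 1 ≤ N ∧ (c ^ N) x = x) ↔ Q.defect x = 0 := by
  unfold AffineQuiver.defect
  constructor
  · rintro ⟨N, hN, h⟩
    let y : Q.V → ℤ := ∑ k ∈ Finset.range N, (c ^ k) x
    have hcy : c y = y := by
      have h1 : c y = ∑ k ∈ Finset.range N, (c ^ (k + 1)) x := by
        simp only [y, map_sum]
        refine Finset.sum_congr rfl fun k _ => ?_
        rw [pow_succ', LinearEquiv.mul_apply]
      have h2 := Finset.sum_range_succ (fun k => (c ^ k) x) N
      rw [Finset.sum_range_succ'] at h2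
      simp only [h, pow_zero, LinearEquiv.coe_one, id] at h2
      rw [h1]
      exact add_right_cancel h2
    obtain ⟨m, hm⟩ := (Q.radical_iff y).1 (fun z => by
      have := hc y z
      rw [hcy] at this
      linarith)
    have h1 : Q.eulerForm Q.δ y = N * Q.eulerForm Q.δ x := by
      simp only [y]
      rw [ef_sum_right, Finset.sum_congr rfl (fun k _ => Q.defect_pow c hc k x)]
      simp
    rw [hm, ef_smul_right, Q.ef_delta_delta, mul_zero] at h1
    rcases mul_eq_zero.1 h1.symm with h2 | h2
    · have : N = 0 := by exact_mod_cast h2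
      omega
    · exact h2
  · intro hd
    have hne : Nonempty Q.V := Q.connected.nonempty
    obtain ⟨i, hi⟩ := Q.exists_sink Q.acyclic
    obtain ⟨N, hN, m, hm⟩ := Q.exists_period c hc x hroot
    obtain ⟨N', hN', m', hm'⟩ := Q.exists_period c hc (Pi.single i 1) (by
      unfold titsForm
      rw [ef_single_of_sink _ _ hi]
      simp)
    refine ⟨N, hN, ?_⟩
    have e1 := Q.pow_mul_period c hc _ _ _ hm N'
    have e2 := Q.pow_mul_period c hc _ _ _ hm' N
    rw [mul_comm N' N] at e2
    have e3 := Q.pow_ef c hc (N * N') x (Pi.single i 1)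
    have e4 := Q.rad x
    have e5 := Q.rad (Pi.single i 1)
    rw [ef_single_of_sink _ _ hi] at e5
    have e6 : Q.eulerForm x Q.δ = 0 := by linarith
    rw [e1, e2] at e3
    simp only [ef_add_left, ef_add_right, ef_smul_left, ef_smul_right, Q.ef_delta_delta,
      e5, e6] at e3
    have e7 : (N' : ℤ) * m * Q.δ i = 0 := by linarith
    have := Q.delta_pos i
    have hm0 : m = 0 := by
      rcases mul_eq_zero.1 e7 with h | h
      · rcases mul_eq_zero.1 h with h | h
        · have : N' = 0 := by exact_mod_cast h
          omega
        · exact h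
      · omega
    rw [hm, hm0, zero_smul, add_zero]
end

section
/- Let Q be an affine quiver and define the weight λ_reg ∈ Hom(ℤ^{Q_0}, ℤ) by λ_reg(β) = e(δ, β) = ∂(β). Let X be a finite-dimensional representation of the preprojective algebra Π_Q over ℂ. Then X is λ_reg-semistable (with respect to Π_Q-subrepresentations) if and only if ρ(X) is a regular representation of Q, i.e., ∂(dim ρ(X)) = 0 and ∂(dim Y) ≤ 0 for every Q-subrepresentation Y ⊆ ρ(X). -/
open scoped BigOperators

set_option linter.unusedSectionVars false

namespace RegSemi

section LinAlg

variable {k : Type} [Field k]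

theorem finrank_pi_submodule {ι : Type} [Fintype ι] {F : ι → Type}
    [∀ a, AddCommGroup (F a)] [∀ a, Module k (F a)] [∀ a, FiniteDimensional k (F a)]
    (p : ∀ a, Submodule k (F a)) :
    Module.finrank k (Submodule.pi Set.univ p) = ∑ a, Module.finrank k (p a) := by
  rw [← Module.finrank_pi_fintype k]
  refine LinearEquiv.finrank_eq
    { toFun := fun x a => ⟨x.1 a, x.2 a (Set.mem_univ a)⟩
      invFun := fun y => ⟨fun a => (y a).1, fun a _ => (y a).2⟩
      map_add' := fun x y => rfl
      map_smul' := fun c x => rfl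
      left_inv := fun x => rfl
      right_inv := fun x => rfl }

theorem finrank_prod_submodule {E F : Type} [AddCommGroup E] [Module k E]
    [AddCommGroup F] [Module k F] [FiniteDimensional k E] [FiniteDimensional k F]
    (p : Submodule k E) (q : Submodule k F) :
    Module.finrank k (p.prod q) = Module.finrank k p + Module.finrank k q := by
  rw [← Module.finrank_prod]
  refine LinearEquiv.finrank_eq
    { toFun := fun x => (⟨x.1.1, x.2.1⟩, ⟨x.1.2, x.2.2⟩)
      invFun := fun y => ⟨(y.1.1, y.2.1), y.1.2, y.2.2⟩
      map_add' := fun x y => rfl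
      map_smul' := fun c x => rfl
      left_inv := fun x => rfl
      right_inv := fun x => rfl }

variable {E B : Type} [AddCommGroup E] [Module k E] [FiniteDimensional k E]
    [AddCommGroup B] [Module k B] [FiniteDimensional k B]

theorem finrank_map_ker (f : E →ₗ[k] B) (S : Submodule k E) :
    Module.finrank k (S.map f) + Module.finrank k (S ⊓ LinearMap.ker f : Submodule k E)
      = Module.finrank k S := by
  have h := (f.domRestrict S).finrank_range_add_finrank_ker
  rw [LinearMap.range_domRestrict, LinearMap.ker_domRestrict] at h
  rw [← Submodule.finrank_map_subtype_eq S, Submodule.map_comap_subtype] at h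
  exact h

theorem finrank_sup_comap (f : E →ₗ[k] B) (S : Submodule k E) (T : Submodule k B) :
    Module.finrank k (S.map f ⊔ T : Submodule k B)
      + Module.finrank k (S ⊓ T.comap f : Submodule k E)
      = Module.finrank k S + Module.finrank k T := by
  have h1 := Submodule.finrank_sup_add_finrank_inf_eq (S.map f) T
  have h2 := finrank_map_ker f S
  have h3 := finrank_map_ker f (S ⊓ T.comap f)
  have h5 : (S ⊓ T.comap f).map f = S.map f ⊓ T := by
    ext x
    constructor
    · rintro ⟨y, ⟨hy, hy'⟩, rfl⟩; exact ⟨⟨y, hy, rfl⟩, hy'⟩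
    · rintro ⟨⟨y, hy, rfl⟩, hy'⟩; exact ⟨y, ⟨hy, hy'⟩, rfl⟩
  rw [h5] at h3
  have h4 : S ⊓ T.comap f ⊓ LinearMap.ker f = S ⊓ LinearMap.ker f := by
    ext x
    simp only [Submodule.mem_inf, Submodule.mem_comap, LinearMap.mem_ker]
    constructor
    · rintro ⟨⟨a, b⟩, c⟩; exact ⟨a, c⟩
    · rintro ⟨a, c⟩; exact ⟨⟨a, by rw [c]; exact T.zero_mem⟩, c⟩
  rw [h4] at h3
  omega

theorem key_dim
    (K Y Z : Submodule k E) (N P : Submodule k B) (f : E →ₗ[k] B) (g : B →ₗ[k] E)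
    (hNP : N ≤ P)
    (hgf : ∀ y, g (f y) = 0) (hfY : ∀ y ∈ Y, f y ∈ P)
    (hK : ∀ y ∈ Y, f y ∈ N → y ∈ K)
    (hgN : ∀ n ∈ N, g n ∈ Y) (hZ : Z ≤ P.map g ⊔ Y) :
    Module.finrank k Z + Module.finrank k N ≤ Module.finrank k K + Module.finrank k P := by
  have h1 := finrank_sup_comap f Y N
  have h2 := finrank_sup_comap g P Y
  have h3 := Submodule.finrank_mono hZ
  have h4 : Y ⊓ N.comap f ≤ K := fun y hy => hK y hy.1 hy.2
  have h5 : Y.map f ⊔ N ≤ P ⊓ Y.comap g := by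
    refine sup_le ?_ (fun n hn => ⟨hNP hn, hgN n hn⟩)
    rintro _ ⟨y, hy, rfl⟩
    exact ⟨hfY y hy, by simp [hgf]⟩
  have h6 := Submodule.finrank_mono h4
  have h7 := Submodule.finrank_mono h5
  omega

end LinAlg

section Core

variable {k : Type} [Field k] {V A : Type} [Fintype V] [Fintype A] [DecidableEq V]
  {s t : A → V} {M : V → Type} [∀ i, AddCommGroup (M i)] [∀ i, Module k (M i)]

/-- Precompose with the identification of `M j` with `M i` when `i = j`, zero otherwise. -/
def fromV (i j : V) {F : Type} [AddCommGroup F] [Module k F] (m : M j →ₗ[k] F) : M i →ₗ[k] F :=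
  m.comp ((LinearMap.proj j).comp (LinearMap.single k M i))

/-- Postcompose with the identification of `M j` with `M i` when `i = j`, zero otherwise. -/
def toV (i j : V) {F : Type} [AddCommGroup F] [Module k F] (m : F →ₗ[k] M j) : F →ₗ[k] M i :=
  (LinearMap.proj i).comp ((LinearMap.single k M j).comp m)

theorem fromV_self (i : V) {F : Type} [AddCommGroup F] [Module k F] (m : M i →ₗ[k] F) :
    fromV i i m = m := by
  ext x; simp [fromV]

theorem fromV_ne {i j : V} (h : j ≠ i) {F : Type} [AddCommGroup F] [Module k F]
    (m : M j →ₗ[k] F) : fromV i j m = 0 := by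
  ext x; simp [fromV, h]

theorem toV_self (i : V) {F : Type} [AddCommGroup F] [Module k F] (m : F →ₗ[k] M i) :
    toV i i m = m := by
  ext x; simp [toV]

theorem toV_ne {i j : V} (h : j ≠ i) {F : Type} [AddCommGroup F] [Module k F]
    (m : F →ₗ[k] M j) : toV i j m = 0 := by
  ext x; simp [toV, h.symm]

variable [∀ i, FiniteDimensional k (M i)]
  (m : ∀ a, M (s a) →ₗ[k] M (t a)) (m' : ∀ a, M (t a) →ₗ[k] M (s a))

theorem vertex_ineq
    (rel : ∀ i (x : M i), ∑ a, toV i (t a) (m a) (fromV i (t a) (m' a) x)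
      = ∑ a, toV i (s a) (m' a) (fromV i (s a) (m a) x))
    (K Y Z : ∀ i, Submodule k (M i)) (hKY : K ≤ Y) (hYZ : Y ≤ Z)
    (hY : ∀ a, ∀ x ∈ Y (s a), m a x ∈ Y (t a))
    (hYZ' : ∀ a, ∀ x ∈ Y (t a), m' a x ∈ Z (s a))
    (hKY' : ∀ a, ∀ x ∈ K (t a), m' a x ∈ Y (s a))
    (i : V)
    (hK : ∀ y ∈ Y i, (∀ a, fromV i (s a) (m a) y ∈ K (t a)) →
      (∀ a, fromV i (t a) (m' a) y ∈ Y (s a)) → y ∈ K i)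
    (hZ : Z i ≤ Y i ⊔ (⨆ a, (Y (t a)).map (toV i (s a) (m' a)))
      ⊔ (⨆ a, (Z (s a)).map (toV i (t a) (m a)))) :
    Module.finrank k (Z i)
        + ((∑ a, if s a = i then Module.finrank k (K (t a)) else 0)
        + (∑ a, if t a = i then Module.finrank k (Y (s a)) else 0))
      ≤ Module.finrank k (K i)
        + ((∑ a, if s a = i then Module.finrank k (Y (t a)) else 0)
        + (∑ a, if t a = i then Module.finrank k (Z (s a)) else 0)) := by
  classical
  let R1 (S : ∀ i, Submodule k (M i)) : Submodule k (∀ a, M (t a)) :=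
    Submodule.pi Set.univ (fun a => if s a = i then S (t a) else ⊥)
  let R2 (S : ∀ i, Submodule k (M i)) : Submodule k (∀ a, M (s a)) :=
    Submodule.pi Set.univ (fun a => if t a = i then S (s a) else ⊥)
  have e1 : ∀ S, Module.finrank k (R1 S)
      = ∑ a, if s a = i then Module.finrank k (S (t a)) else 0 := by
    intro S
    rw [finrank_pi_submodule]
    refine Finset.sum_congr rfl fun a _ => ?_
    by_cases h : s a = i
    · rw [if_pos h, if_pos h]
    · rw [if_neg h, if_neg h, finrank_bot]
  have e2 : ∀ S, Module.finrank k (R2 S)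
      = ∑ a, if t a = i then Module.finrank k (S (s a)) else 0 := by
    intro S
    rw [finrank_pi_submodule]
    refine Finset.sum_congr rfl fun a _ => ?_
    by_cases h : t a = i
    · rw [if_pos h, if_pos h]
    · rw [if_neg h, if_neg h, finrank_bot]
  rw [← e1, ← e1, ← e2, ← e2, ← finrank_prod_submodule (R1 K) (R2 Y),
    ← finrank_prod_submodule (R1 Y) (R2 Z)]
  refine key_dim (K i) (Y i) (Z i) _ _
    ((LinearMap.pi fun a => fromV i (s a) (m a)).prod
      (LinearMap.pi fun a => fromV i (t a) (m' a)))
    (LinearMap.coprod (∑ a, (toV i (s a) (m' a)).comp (LinearMap.proj a))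
      (-∑ a, (toV i (t a) (m a)).comp (LinearMap.proj a))) ?_ ?_ ?_ ?_ ?_ ?_
  · refine Submodule.prod_mono (fun x hx a ha => ?_) (fun x hx a ha => ?_)
    · have := hx a ha
      dsimp only at this ⊢
      split_ifs at this ⊢
      · exact hKY _ this
      · exact this
    · have := hx a ha
      dsimp only at this ⊢
      split_ifs at this ⊢
      · exact hYZ _ this
      · exact this
  · intro y
    simp [rel]
  · intro y hy
    refine ⟨fun a ha => ?_, fun a ha => ?_⟩
    · change fromV i (s a) (m a) y ∈ (if s a = i then Y (t a) else ⊥)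
      split_ifs with h
      · subst h
        rw [fromV_self]; exact hY a y hy
      · rw [fromV_ne h]; simp
    · change fromV i (t a) (m' a) y ∈ (if t a = i then Z (s a) else ⊥)
      split_ifs with h
      · subst h
        rw [fromV_self]; exact hYZ' a y hy
      · rw [fromV_ne h]; simp
  · rintro y hy ⟨h1, h2⟩
    refine hK y hy (fun a => ?_) (fun a => ?_)
    · have := h1 a (Set.mem_univ a)
      dsimp at this
      split_ifs at this with h
      · exact this
      · rw [fromV_ne h]; simp
    · have := h2 a (Set.mem_univ a)
      dsimp at this
      split_ifs at this with h
      · exact this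
      · rw [fromV_ne h]; simp
  · rintro ⟨u, v⟩ ⟨h1, h2⟩
    have g1 : ∀ a, toV i (s a) (m' a) (u a) ∈ Y i := fun a => by
      have := h1 a (Set.mem_univ a)
      dsimp at this
      split_ifs at this with h
      · subst h; rw [toV_self]; exact hKY' a _ this
      · rw [toV_ne h]; simp
    have g2 : ∀ a, toV i (t a) (m a) (v a) ∈ Y i := fun a => by
      have := h2 a (Set.mem_univ a)
      dsimp at this
      split_ifs at this with h
      · subst h; rw [toV_self]; exact hY a _ this
      · rw [toV_ne h]; simp
    simp only [LinearMap.coprod_apply, LinearMap.neg_apply, LinearMap.sum_apply,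
      LinearMap.comp_apply, LinearMap.proj_apply]
    exact (Y i).add_mem ((Y i).sum_mem fun a _ => g1 a)
      ((Y i).neg_mem ((Y i).sum_mem fun a _ => g2 a))
  · refine hZ.trans (sup_le (sup_le le_sup_right ?_) ?_)
    · refine iSup_le fun a => ?_
      rintro _ ⟨u, hu, rfl⟩
      by_cases h : s a = i
      · refine Submodule.mem_sup_left ⟨(Pi.single a u, 0), ⟨fun b _ => ?_, by simp⟩, ?_⟩
        · by_cases hb : b = a
          · subst hb; simpa [h] using hu
          · simp [hb]
        · simp only [LinearMap.coprod_apply, map_zero, add_zero, LinearMap.sum_apply,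
            LinearMap.comp_apply, LinearMap.proj_apply]
          rw [Finset.sum_eq_single a]
          · simp
          · intro b _ hb; simp [hb]
          · simp
      · rw [toV_ne h]; simp
    · refine iSup_le fun a => ?_
      rintro _ ⟨u, hu, rfl⟩
      by_cases h : t a = i
      · refine Submodule.mem_sup_left ⟨(0, Pi.single a (-u)), ⟨by simp, fun b _ => ?_⟩, ?_⟩
        · by_cases hb : b = a
          · subst hb; simpa [h] using hu
          · simp [hb]
        · simp only [LinearMap.coprod_apply, map_zero, zero_add, LinearMap.sum_apply,
            LinearMap.comp_apply, LinearMap.proj_apply, LinearMap.neg_apply]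
          rw [Finset.sum_eq_single a]
          · simp
          · intro b _ hb; simp [hb]
          · simp
      · rw [toV_ne h]; simp

theorem exists_KZ
    (Y : ∀ i, Submodule k (M i)) :
    ∃ K Z : ∀ i, Submodule k (M i), K ≤ Y ∧ Y ≤ Z ∧
      (∀ a, ∀ x ∈ K (s a), m a x ∈ K (t a)) ∧
      (∀ a, ∀ x ∈ Z (s a), m a x ∈ Z (t a)) ∧
      (∀ a, ∀ x ∈ Y (t a), m' a x ∈ Z (s a)) ∧
      (∀ a, ∀ x ∈ K (t a), m' a x ∈ Y (s a)) ∧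
      (∀ i, ∀ y ∈ Y i, (∀ a, fromV i (s a) (m a) y ∈ K (t a)) →
        (∀ a, fromV i (t a) (m' a) y ∈ Y (s a)) → y ∈ K i) ∧
      (∀ i, Z i ≤ Y i ⊔ (⨆ a, (Y (t a)).map (toV i (s a) (m' a)))
        ⊔ (⨆ a, (Z (s a)).map (toV i (t a) (m a)))) := by
  let Φ : (∀ i, Submodule k (M i)) →o (∀ i, Submodule k (M i)) :=
    { toFun := fun K i => Y i ⊓ (⨅ a, (K (t a)).comap (fromV i (s a) (m a)))
        ⊓ (⨅ a, (Y (s a)).comap (fromV i (t a) (m' a)))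
      monotone' := fun K K' h i => by
        refine inf_le_inf_right _ (inf_le_inf_left _ (iInf_mono fun a => ?_))
        exact Submodule.comap_mono (h (t a)) }
  let Ψ : (∀ i, Submodule k (M i)) →o (∀ i, Submodule k (M i)) :=
    { toFun := fun Z i => Y i ⊔ (⨆ a, (Y (t a)).map (toV i (s a) (m' a)))
        ⊔ (⨆ a, (Z (s a)).map (toV i (t a) (m a)))
      monotone' := fun K K' h i => by
        refine sup_le_sup_left (iSup_mono fun a => ?_) _
        exact Submodule.map_mono (h (s a)) }
  have hK : Φ Φ.gfp = Φ.gfp := Φ.map_gfp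
  have hZ : Ψ Ψ.lfp = Ψ.lfp := Ψ.map_lfp
  generalize Φ.gfp = K at hK
  generalize Ψ.lfp = Z at hZ
  have hK' : ∀ i x, x ∈ K i ↔ ((x ∈ Y i ∧ ∀ a, fromV i (s a) (m a) x ∈ K (t a)) ∧
      ∀ a, fromV i (t a) (m' a) x ∈ Y (s a)) := by
    intro i x
    have : x ∈ K i ↔ x ∈ Φ K i := by rw [hK]
    rw [this]
    change x ∈ Y i ⊓ (⨅ a, (K (t a)).comap (fromV i (s a) (m a)))
        ⊓ (⨅ a, (Y (s a)).comap (fromV i (t a) (m' a))) ↔ _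
    simp only [Submodule.mem_inf, Submodule.mem_iInf, Submodule.mem_comap]
  have hZ' : ∀ i, Y i ⊔ (⨆ a, (Y (t a)).map (toV i (s a) (m' a)))
        ⊔ (⨆ a, (Z (s a)).map (toV i (t a) (m a))) = Z i := fun i => congrFun hZ i
  refine ⟨K, Z, fun i x hx => ((hK' i x).1 hx).1.1, fun i => ?_, fun a x hx => ?_,
    fun a x hx => ?_, fun a x hx => ?_, fun a x hx => ?_,
    fun i y hy h1 h2 => (hK' i y).2 ⟨⟨hy, h1⟩, h2⟩, fun i => (hZ' i).ge⟩
  · rw [← hZ' i]; exact le_sup_left.trans le_sup_left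
  · have := ((hK' _ x).1 hx).1.2 a
    rwa [fromV_self] at this
  · rw [← hZ' (t a)]
    refine Submodule.mem_sup_right (Submodule.mem_iSup_of_mem a ⟨x, hx, ?_⟩)
    rw [toV_self]
  · rw [← hZ' (s a)]
    refine Submodule.mem_sup_left (Submodule.mem_sup_right
      (Submodule.mem_iSup_of_mem a ⟨x, hx, ?_⟩))
    rw [toV_self]
  · have := ((hK' _ x).1 hx).2 a
    rwa [fromV_self] at this

/-- The dimension vector of a family of subspaces. -/
noncomputable def dv (Y : ∀ i, Submodule k (M i)) : V → ℤ := fun i => (Module.finrank k (Y i) : ℤ)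

theorem core
    (rel : ∀ i (x : M i), ∑ a, toV i (t a) (m a) (fromV i (t a) (m' a) x)
      = ∑ a, toV i (s a) (m' a) (fromV i (s a) (m a) x))
    (δ : V → ℤ) (hδ : ∀ i, 0 ≤ δ i) (d : (V → ℤ) → ℤ)
    (d1 : ∀ x, d x = ∑ i, δ i * x i - ∑ a, δ (s a) * x (t a))
    (d2 : ∀ x, d x = ∑ a, δ (t a) * x (s a) - ∑ i, δ i * x i)
    (hs : ∀ Y : ∀ i, Submodule k (M i), (∀ a, ∀ x ∈ Y (s a), m a x ∈ Y (t a)) →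
      (∀ a, ∀ x ∈ Y (t a), m' a x ∈ Y (s a)) → d (dv Y) ≤ 0)
    (Y₀ : ∀ i, Submodule k (M i)) (hY₀ : ∀ a, ∀ x ∈ Y₀ (s a), m a x ∈ Y₀ (t a)) :
    d (dv Y₀) ≤ 0 := by
  -- maximal defect
  obtain ⟨D, ⟨Y₁, hY₁, rfl⟩, hmax⟩ := Int.exists_greatest_of_bdd
    (P := fun n => ∃ Y : ∀ i, Submodule k (M i),
      (∀ a, ∀ x ∈ Y (s a), m a x ∈ Y (t a)) ∧ d (dv Y) = n)
    ⟨∑ i, δ i * (Module.finrank k (M i) : ℤ), by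
      rintro _ ⟨Y, -, rfl⟩
      rw [d1]
      have h1 : ∑ i, δ i * dv Y i ≤ ∑ i, δ i * (Module.finrank k (M i) : ℤ) :=
        Finset.sum_le_sum fun i _ => mul_le_mul_of_nonneg_left
          (Int.ofNat_le.2 (Submodule.finrank_le (Y i))) (hδ i)
      have h2 : 0 ≤ ∑ a, δ (s a) * dv Y (t a) :=
        Finset.sum_nonneg fun a _ => mul_nonneg (hδ _) (by simp [dv])
      linarith⟩ ⟨_, Y₀, hY₀, rfl⟩
  refine (hmax _ ⟨Y₀, hY₀, rfl⟩).trans ?_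
  obtain ⟨T, ⟨Y, hY, hYd, rfl⟩, hmax'⟩ := Int.exists_greatest_of_bdd
    (P := fun n => ∃ Y : ∀ i, Submodule k (M i),
      (∀ a, ∀ x ∈ Y (s a), m a x ∈ Y (t a)) ∧ d (dv Y) = d (dv Y₁) ∧ ∑ i, dv Y i = n)
    ⟨∑ i, (Module.finrank k (M i) : ℤ), by
      rintro _ ⟨Y, -, -, rfl⟩
      exact Finset.sum_le_sum fun i _ => Int.ofNat_le.2 (Submodule.finrank_le (Y i))⟩ ⟨_, Y₁, hY₁, rfl, rfl⟩
  rw [← hYd] at hmax hmax' ⊢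
  obtain ⟨K, Z, hKY, hYZ, hK, hZ, hYZ', hKY', hK1, hZ1⟩ := exists_KZ m m' Y
  have hv := fun i => vertex_ineq m m' rel K Y Z hKY hYZ hY hYZ' hKY' i (hK1 i) (hZ1 i)
  have hv' : ∀ i, dv Z i + ((∑ a, if s a = i then dv K (t a) else 0)
        + (∑ a, if t a = i then dv Y (s a) else 0)) ≤
      dv K i + ((∑ a, if s a = i then dv Y (t a) else 0)
        + (∑ a, if t a = i then dv Z (s a) else 0)) := fun i => by
    simp only [dv]
    exact_mod_cast hv i
  have hsum := Finset.sum_le_sum (s := Finset.univ) fun i _ =>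
    mul_le_mul_of_nonneg_left (hv' i) (hδ i)
  have sw : ∀ (r : A → V) (x : A → ℤ),
      ∑ i, δ i * (∑ a, if r a = i then x a else 0) = ∑ a, δ (r a) * x a := by
    intro r x
    simp_rw [Finset.mul_sum]
    rw [Finset.sum_comm]
    simp
  simp only [mul_add, Finset.sum_add_distrib, sw] at hsum
  have hKm := hmax _ ⟨K, hK, rfl⟩
  have hZm := hmax _ ⟨Z, hZ, rfl⟩
  have e1 := d1 (dv K)
  have e2 := d2 (dv Z)
  have e3 := d1 (dv Y)
  have e4 := d2 (dv Y)
  have hZd : d (dv Z) = d (dv Y) := by linarith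
  have hT := hmax' _ ⟨Z, hZ, hZd, rfl⟩
  have hle : ∀ i ∈ Finset.univ, dv Y i ≤ dv Z i := fun i _ => by
    simp only [dv]; exact_mod_cast Submodule.finrank_mono (hYZ i)
  have heq := (Finset.sum_eq_sum_iff_of_le hle).1 (le_antisymm (Finset.sum_le_sum hle) hT)
  have hYeq : Y = Z := funext fun i => Submodule.eq_of_le_of_finrank_eq (hYZ i) (by
    have := heq i (Finset.mem_univ i)
    simp only [dv] at this
    exact_mod_cast this)
  exact hs Y hY (fun a x hx => by have := hYZ' a x hx; rwa [← hYeq] at this)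

end Core

end RegSemi

/-- Let `Q` be an affine quiver and let `λ_reg(β) = e(δ, β) = ∂(β)`.  A representation
`X` of the preprojective algebra `Π_Q` over `ℂ` is `λ_reg`-semistable (with respect to
`Π_Q`-subrepresentations) if and only if `ρ(X)` is a regular representation of `Q`:
`∂(dim ρ(X)) = 0` and `∂(dim Y) ≤ 0` for every `Q`-subrepresentation `Y ⊆ ρ(X)`. -/
theorem lambda_reg_semistable_iff_rho_regular
    (Q : AffineQuiver) (X : QRep Q.toFinQuiver.double ℂ)
    (hX : PreprojRel Q.toFinQuiver X) :
    (Q.defect X.dimVec = 0 ∧ ∀ U : SubRep X, Q.defect U.dimVec ≤ 0) ↔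
      (Q.defect (rho X).dimVec = 0 ∧
        ∀ Y : SubRep (rho X), Q.defect Y.dimVec ≤ 0) := by
  constructor
  · rintro ⟨h0, h⟩
    refine ⟨h0, fun Y => ?_⟩
    have hrad := (Q.radical_iff Q.δ).2 ⟨1, by simp⟩
    refine RegSemi.core (k := ℂ) (V := Q.V) (A := Q.A) (s := Q.src) (t := Q.tgt)
      (M := (rho X).carrier) (fun a => X.map (Sum.inl a)) (fun a => X.map (Sum.inr a)) ?_
      Q.δ (fun i => (Q.delta_pos i).le) Q.defect (fun x => rfl) ?_ ?_ Y.mod Y.stable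
    · intro i x
      have := congrFun (LinearMap.congr_fun hX (LinearMap.single ℂ X.carrier i x)) i
      rw [LinearMap.sum_apply, LinearMap.sum_apply] at this
      have h2 := (Finset.sum_apply (M := X.carrier) i _ _).symm.trans
        (this.trans (Finset.sum_apply (M := X.carrier) i _ _))
      have e1 : ∀ a : Q.A, ((arrowEnd X (Sum.inl a)).comp (arrowEnd X (Sum.inr a)))
          (LinearMap.single ℂ X.carrier i x) i
          = RegSemi.toV (M := (rho X).carrier) i (Q.tgt a) (X.map (Sum.inl a))
            (RegSemi.fromV (M := (rho X).carrier) i (Q.tgt a) (X.map (Sum.inr a)) x) := by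
        intro a
        have e := RegSemi.fromV_self (k := ℂ) (M := (rho X).carrier) (Q.src a)
          (F := (rho X).carrier (Q.tgt a)) (X.map (Sum.inl a))
        exact congrArg (fun f => RegSemi.toV (M := (rho X).carrier) i (Q.tgt a) f
          (RegSemi.fromV (M := (rho X).carrier) i (Q.tgt a) (X.map (Sum.inr a)) x)) e
      have e2 : ∀ a : Q.A, ((arrowEnd X (Sum.inr a)).comp (arrowEnd X (Sum.inl a)))
          (LinearMap.single ℂ X.carrier i x) i
          = RegSemi.toV (M := (rho X).carrier) i (Q.src a) (X.map (Sum.inr a))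
            (RegSemi.fromV (M := (rho X).carrier) i (Q.src a) (X.map (Sum.inl a)) x) := by
        intro a
        have e := RegSemi.fromV_self (k := ℂ) (M := (rho X).carrier) (Q.tgt a)
          (F := (rho X).carrier (Q.src a)) (X.map (Sum.inr a))
        exact congrArg (fun f => RegSemi.toV (M := (rho X).carrier) i (Q.src a) f
          (RegSemi.fromV (M := (rho X).carrier) i (Q.src a) (X.map (Sum.inl a)) x)) e
      simp only [e1, e2] at h2
      exact h2
    · intro x
      have h1 := hrad x
      have h2 : Q.eulerForm x Q.δ = ∑ i, Q.δ i * x i - ∑ a, Q.δ (Q.tgt a) * x (Q.src a) := by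
        simp only [FinQuiver.eulerForm, mul_comm]
      have h3 : Q.defect x = Q.eulerForm Q.δ x := rfl
      linarith
    · intro W h1 h2
      exact h ⟨W, fun a => match a with
        | Sum.inl a => h1 a
        | Sum.inr a => h2 a⟩
  · rintro ⟨h0, h⟩
    exact ⟨h0, fun U => h (rhoSub U)⟩
end
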